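/- arXiv:0801.3074 — 3 statements merged into one kernel-verified Lean document; each statement's English description precedes it below -/
import Mathlib

section
/- The singular locus of the commuting variety is contained in its irregular locus: C^sing ⊆ C^irr. Explicitly, if z = (a,b) ∈ C is a point with dim T_z(C) > dim g + rk g, then dim(g_a ∩ g_b) > rk g. -/
noncomputable section

namespace CV

variable (k : Type*) [Field k] (V : Type*) [AddCommGroup V] [Module k V] [FiniteDimensional k V]

/-- Coordinates with respect to a chosen basis of `V`. -/
def coordFn (z : V) (i : Module.Free.ChooseBasisIndex k V) : k :=
  (Module.Free.chooseBasis k V).repr z i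

/-- Evaluation of a polynomial (in the chosen coordinates) at a point of `V`. -/
def evalP (F : MvPolynomial (Module.Free.ChooseBasisIndex k V) k) (z : V) : k :=
  MvPolynomial.aeval (coordFn k V z) F

/-- The Zariski topology on `V`: generated by complements of zero sets of polynomial
functions. -/
def zar : TopologicalSpace V :=
  TopologicalSpace.generateFrom
    {U | ∃ F : MvPolynomial (Module.Free.ChooseBasisIndex k V) k, U = {z | evalP k V F z ≠ 0}}

/-- The dimension of a subset of `V`:  the Krull dimension for the topology induced by the
Zariski topology of `V`. -/
def dimSet (S : Set V) : WithBot ℕ∞ :=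
  @topologicalKrullDim S (TopologicalSpace.induced Subtype.val (zar k V))

/-- The differential at `z ∈ V` of a polynomial `F`, as a linear functional on `V`. -/
def diffAt (F : MvPolynomial (Module.Free.ChooseBasisIndex k V) k) (z : V) : V →ₗ[k] k :=
  (Module.Free.chooseBasis k V).constr k fun i => evalP k V (MvPolynomial.pderiv i F) z

/-- The Zariski tangent space at `z` of a subset `S ⊆ V`:  the common kernel of the
differentials at `z` of all polynomial functions vanishing identically on `S`. -/
def tangent (S : Set V) (z : V) : Submodule k V :=
  ⨅ F ∈ {F | ∀ w ∈ S, evalP k V F w = 0}, LinearMap.ker (diffAt k V F z)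

end CV

/-- The commuting variety `C = {(x,y) ∈ g × g | [x,y] = 0}`. -/
def commSet (k : Type*) (g : Type*) [Field k] [LieRing g] [LieAlgebra k g] : Set (g × g) :=
  {p | ⁅p.1, p.2⁆ = 0}

/-- The centralizer `g_x = {y ∈ g | [x,y] = 0}` of an element `x` of a Lie algebra,
as a submodule. -/
def cent (k : Type*) {g : Type*} [Field k] [LieRing g] [LieAlgebra k g] (x : g) :
    Submodule k g := LinearMap.ker (LieAlgebra.ad k g x)

section Helpers
variable {K : Type*} [Field K]

/-- A bilinear form on `V` as a quadratic polynomial in the chosen coordinates. -/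
def CV.quadPoly {V : Type*} [AddCommGroup V] [Module K V] [FiniteDimensional K V]
    (β : V →ₗ[K] V →ₗ[K] K) : MvPolynomial (Module.Free.ChooseBasisIndex K V) K :=
  ∑ i, ∑ j, MvPolynomial.C (β (Module.Free.chooseBasis K V i) (Module.Free.chooseBasis K V j)) *
    (MvPolynomial.X i * MvPolynomial.X j)

lemma CV.bilin_expand {V : Type*} [AddCommGroup V] [Module K V] [FiniteDimensional K V]
    (β : V →ₗ[K] V →ₗ[K] K) (v w : V) :
    β v w = ∑ i, ∑ j, β (Module.Free.chooseBasis K V i) (Module.Free.chooseBasis K V j) *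
      (CV.coordFn K V v i * CV.coordFn K V w j) := by
  conv_lhs => rw [← (Module.Free.chooseBasis K V).sum_repr v,
    ← (Module.Free.chooseBasis K V).sum_repr w]
  simp only [map_sum, map_smul, LinearMap.sum_apply, LinearMap.smul_apply, smul_eq_mul,
    CV.coordFn, Finset.mul_sum]
  rw [Finset.sum_comm]
  refine Finset.sum_congr rfl fun i _ => Finset.sum_congr rfl fun j _ => ?_
  ring

lemma CV.evalP_quadPoly {V : Type*} [AddCommGroup V] [Module K V] [FiniteDimensional K V]
    (β : V →ₗ[K] V →ₗ[K] K) (w : V) : CV.evalP K V (CV.quadPoly β) w = β w w := by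
  rw [CV.bilin_expand β w w]
  simp [CV.evalP, CV.quadPoly]

lemma CV.diffAt_quadPoly {V : Type*} [AddCommGroup V] [Module K V] [FiniteDimensional K V]
    (β : V →ₗ[K] V →ₗ[K] K) (z v : V) :
    CV.diffAt K V (CV.quadPoly β) z v = β v z + β z v := by
  have h : CV.diffAt K V (CV.quadPoly β) z = β.flip z + β z := by
    refine (Module.Free.chooseBasis K V).ext fun l => ?_
    classical
    rw [CV.diffAt, Module.Basis.constr_basis, LinearMap.add_apply, LinearMap.flip_apply,
      CV.bilin_expand β _ z, CV.bilin_expand β z, ← Finset.sum_add_distrib]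
    simp only [CV.evalP, CV.quadPoly, map_sum, Derivation.leibniz, MvPolynomial.pderiv_C,
      MvPolynomial.pderiv_X, smul_eq_mul, mul_zero, add_zero, map_mul, map_add,
      MvPolynomial.aeval_X, MvPolynomial.aeval_C, Algebra.algebraMap_self, RingHom.id_apply,
      ← Finset.sum_add_distrib]
    refine Finset.sum_congr rfl fun i _ => Finset.sum_congr rfl fun j _ => ?_
    simp only [CV.coordFn, Module.Basis.repr_self, Finsupp.single_apply, Pi.single_apply, eq_comm]
    split_ifs <;> simp <;> ring
  rw [h]; rfl

variable {L : Type*} [LieRing L] [LieAlgebra K L] [FiniteDimensional K L]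

/-- The differential of the bracket at `(a,b)`. -/
def dBr (a b : L) : L × L →ₗ[K] L :=
  (LieAlgebra.ad K L a).comp (LinearMap.snd K L L) -
    (LieAlgebra.ad K L b).comp (LinearMap.fst K L L)

lemma tangent_le_ker (a b : L) :
    CV.tangent K (L × L) (commSet K L) (a, b) ≤ LinearMap.ker (dBr (K := K) a b) := by
  intro v hv
  rw [LinearMap.mem_ker, ← Module.forall_dual_apply_eq_zero_iff K]
  intro lam
  let β : (L × L) →ₗ[K] (L × L) →ₗ[K] K :=
    ((LieModule.toEnd K L L : L →ₗ[K] L →ₗ[K] L).compl₁₂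
      (LinearMap.fst K L L) (LinearMap.snd K L L)).compr₂ lam
  have hβ : ∀ v w : L × L, β v w = lam ⁅v.1, w.2⁆ := fun v w => rfl
  simp only [CV.tangent, Submodule.mem_iInf, Set.mem_setOf_eq, LinearMap.mem_ker] at hv
  have := hv (CV.quadPoly β) (fun w hw => by
    rw [CV.evalP_quadPoly, hβ]
    have : ⁅w.1, w.2⁆ = 0 := hw
    rw [this, map_zero])
  rw [CV.diffAt_quadPoly, hβ, hβ, ← map_add] at this
  rw [← this]
  congr 1
  simp only [dBr, LinearMap.sub_apply, LinearMap.comp_apply, LinearMap.snd_apply,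
    LinearMap.fst_apply, LieAlgebra.ad_apply]
  rw [← lie_skew b v.1]; abel

lemma trivRad {S : Type*} [LieRing S] [LieAlgebra K S]
    (hred : LieAlgebra.radical K L = LieAlgebra.center K L)
    (π : L →ₗ⁅K⁆ S) (hs : Function.Surjective π)
    (hk : ∀ x, π x = 0 ↔ ∀ y : L, ⁅y, x⁆ = 0) :
    LieAlgebra.HasTrivialRadical K S := by
  rw [LieAlgebra.hasTrivialRadical_iff_no_abelian_ideals]
  intro I hI
  let J : LieIdeal K L := I.comap π
  have hJ : LieAlgebra.derivedSeriesOfIdeal K L 2 J = ⊥ := by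
    have h1 : ⁅J, J⁆ ≤ LieAlgebra.center K L := by
      rw [LieSubmodule.lie_le_iff]
      intro x hx m hm
      have hx' : π x ∈ I := by simpa [J] using hx
      have hm' : π m ∈ I := by simpa [J] using hm
      rw [LieModule.mem_maxTrivSubmodule, ← hk, LieHom.map_lie]
      have := hI.trivial ⟨π x, hx'⟩ ⟨π m, hm'⟩
      simpa using congrArg Subtype.val this
    have h2 : ⁅⁅J, J⁆, ⁅J, J⁆⁆ = ⊥ := by
      rw [eq_bot_iff, LieSubmodule.lie_le_iff]
      intro x hx m hm
      rw [LieSubmodule.mem_bot]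
      exact h1 hm x
    simpa [LieAlgebra.derivedSeriesOfIdeal_succ] using h2
  have hsol : LieAlgebra.IsSolvable J :=
    LieAlgebra.IsSolvable.mk (R := K) (k := 2) ((LieIdeal.derivedSeries_eq_bot_iff J 2).mpr hJ)
  have hle : J ≤ LieAlgebra.center K L := by
    rw [← hred]; exact (LieAlgebra.LieIdeal.solvable_iff_le_radical K L J).mp hsol
  rw [eq_bot_iff]
  intro y hy
  obtain ⟨x, rfl⟩ := hs y
  have hx : x ∈ J := by simpa [J] using hy
  rw [LieSubmodule.mem_bot, hk]
  exact hle hx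

open LieAlgebra in
/-- Each linear functional on `L` restricted to `[L, L]` comes from the Killing form of `S`. -/
lemma exists_repr {S : Type*} [LieRing S] [LieAlgebra K S] [FiniteDimensional K S]
    [LieAlgebra.IsKilling K S]
    (π : L →ₗ⁅K⁆ S) (hs : Function.Surjective π)
    (hk : ∀ x, π x = 0 ↔ ∀ y : L, ⁅y, x⁆ = 0) (lam : Module.Dual K L) :
    ∃ d : S, ∀ x y : L, lam ⁅x, y⁆ = killingForm K S d (π ⁅x, y⁆) := by
  have hnd := IsKilling.killingForm_nondegenerate K S
  obtain ⟨σ, hσ⟩ := (π : L →ₗ[K] S).exists_rightInverse_of_surjective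
    (LinearMap.range_eq_top.mpr hs)
  have hσ' : ∀ s, π (σ s) = s := fun s => LinearMap.congr_fun hσ s
  have hwd : ∀ x x' y y' : L, π x = π x' → π y = π y' → ⁅x, y⁆ = ⁅x', y'⁆ := by
    intro x x' y y' h h'
    have h1 := (hk (x - x')).mp (by rw [map_sub, h, sub_self])
    have h2 := (hk (y - y')).mp (by rw [map_sub, h', sub_self])
    have e1 : ⁅x - x', y⁆ = 0 := by rw [← lie_skew, h1, neg_zero]
    have e2 := h2 x'
    rw [sub_lie, sub_eq_zero] at e1
    rw [lie_sub, sub_eq_zero] at e2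
    rw [e1, e2]
  let ω : S →ₗ[K] Module.Dual K S :=
    ((LieModule.toEnd K L L : L →ₗ[K] L →ₗ[K] L).compl₁₂ σ σ).compr₂ lam
  have hω : ∀ s u, ω s u = lam ⁅σ s, σ u⁆ := fun _ _ => rfl
  let D : S →ₗ[K] S := (LinearMap.BilinForm.toDual _ hnd).symm.toLinearMap ∘ₗ ω
  have hD : ∀ s u, killingForm K S (D s) u = lam ⁅σ s, σ u⁆ := fun s u =>
    LinearMap.BilinForm.apply_toDual_symm_apply (hB := hnd) (ω s) u
  have hσl : ∀ s u v, ⁅σ ⁅s, u⁆, σ v⁆ = ⁅⁅σ s, σ u⁆, σ v⁆ := fun s u v =>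
    hwd _ _ _ _ (by rw [hσ', LieHom.map_lie, hσ', hσ']) rfl
  have hσr : ∀ s u v, ⁅σ v, σ ⁅s, u⁆⁆ = ⁅σ v, ⁅σ s, σ u⁆⁆ := fun s u v =>
    hwd _ _ _ _ rfl (by rw [hσ', LieHom.map_lie, hσ', hσ'])
  have hinv : ∀ x y z : S, killingForm K S ⁅x, y⁆ z = killingForm K S x ⁅y, z⁆ :=
    LieModule.traceForm_apply_lie_apply K S S
  have hleib : ∀ s u, D ⁅s, u⁆ = ⁅s, D u⁆ - ⁅u, D s⁆ := by
    intro s u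
    apply (LinearMap.BilinForm.toDual _ hnd).injective
    ext v
    simp only [LinearMap.BilinForm.toDual_def, hD, map_sub, LinearMap.sub_apply]
    rw [← lie_skew s (D u), ← lie_skew u (D s)]
    simp only [map_neg, LinearMap.neg_apply, hinv, hD, hσl, hσr]
    rw [lie_lie, map_sub]
    ring
  let DD : LieDerivation K S S := { D with leibniz' := hleib }
  obtain ⟨d, hd⟩ := LieDerivation.IsKilling.exists_eq_ad DD
  have hd' : ∀ s, D s = ⁅d, s⁆ := fun s => by
    have := DFunLike.congr_fun hd s
    exact this.symm.trans (by simp)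
  refine ⟨d, fun x y => ?_⟩
  rw [LieHom.map_lie, ← hinv, ← hd', hD]
  congr 1
  exact hwd _ _ _ _ (hσ' _).symm (hσ' _).symm

lemma finrank_ineq_aux {S : Type*} [LieRing S] [LieAlgebra K S] [FiniteDimensional K S]
    [LieAlgebra.IsKilling K S]
    (π : L →ₗ⁅K⁆ S) (hs : Function.Surjective π)
    (hk : ∀ x, π x = 0 ↔ ∀ y : L, ⁅y, x⁆ = 0) (a b : L) :
    Module.finrank K L ≤ Module.finrank K (LinearMap.range (dBr (K := K) a b)) +
      Module.finrank K ↥(cent K a ⊓ cent K b) := by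
  have hnd := LieAlgebra.IsKilling.killingForm_nondegenerate K S
  have hinv : ∀ x y z : S, killingForm K S ⁅x, y⁆ z = killingForm K S x ⁅y, z⁆ :=
    LieModule.traceForm_apply_lie_apply K S S
  have hcomm : ∀ x y : S, killingForm K S x y = killingForm K S y x :=
    LieModule.traceForm_comm K S S
  have hz : ∀ s : S, (∀ u, killingForm K S s u = 0) → s = 0 := by
    intro s h
    apply (LinearMap.BilinForm.toDual _ hnd).injective
    ext v
    simp [LinearMap.BilinForm.toDual_def, h]
  have hdBr : ∀ x y, dBr (K := K) a b (x, y) = ⁅a, y⁆ - ⁅b, x⁆ := fun _ _ => rfl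
  -- brackets combined with the kernel
  have hker1 : ∀ x y : L, π ⁅x, y⁆ = 0 → ⁅x, y⁆ = 0 := by
    intro x y h
    rw [← Module.forall_dual_apply_eq_zero_iff K]
    intro lam
    obtain ⟨d, hd⟩ := exists_repr π hs hk lam
    rw [hd, h, map_zero]
  have hker2 : ∀ v, π (dBr (K := K) a b v) = 0 → dBr (K := K) a b v = 0 := by
    rintro ⟨x, y⟩ h
    rw [hdBr] at h ⊢
    rw [← Module.forall_dual_apply_eq_zero_iff K]
    intro lam
    obtain ⟨d, hd⟩ := exists_repr π hs hk lam
    rw [map_sub, hd, hd, ← map_sub, ← map_sub, h, map_zero]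
  let B : LinearMap.BilinForm K L :=
    (killingForm K S).compl₁₂ (π : L →ₗ[K] S) (π : L →ₗ[K] S)
  have hB : ∀ x y, B x y = killingForm K S (π x) (π y) := fun _ _ => rfl
  have key := LinearMap.BilinForm.finrank_add_finrank_orthogonal' (B := B)
    (LinearMap.range (dBr (K := K) a b))
  have hle : B.orthogonal (LinearMap.range (dBr (K := K) a b)) ≤ cent K a ⊓ cent K b := by
    intro x hx
    have hx' : ∀ u v : L, killingForm K S (π (⁅a, v⁆ - ⁅b, u⁆)) (π x) = 0 := fun u v =>
      hx _ ⟨(u, v), rfl⟩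
    have aux : ∀ c : L, (∀ v, killingForm K S (π ⁅c, v⁆) (π x) = 0) → ⁅c, x⁆ = 0 := by
      intro c hc
      rw [← lie_skew, neg_eq_zero]
      apply hker1
      rw [LieHom.map_lie]
      apply hz
      intro s
      obtain ⟨v, rfl⟩ := hs s
      rw [hinv, hcomm, ← LieHom.map_lie, hc]
    refine ⟨aux a fun v => ?_, aux b fun v => ?_⟩
    · simpa using hx' 0 v
    · have h := hx' v 0
      rw [lie_zero, zero_sub, map_neg, map_neg, LinearMap.neg_apply, neg_eq_zero] at h
      exact h
  have := Submodule.finrank_mono hle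
  omega
end Helpers

section Main
variable {K : Type*} [Field K] {L : Type*} [LieRing L] [LieAlgebra K L] [FiniteDimensional K L]

lemma finrank_ineq [CharZero K] (hred : LieAlgebra.radical K L = LieAlgebra.center K L)
    (a b : L) :
    Module.finrank K L ≤ Module.finrank K (LinearMap.range (dBr (K := K) a b)) +
      Module.finrank K ↥(cent K a ⊓ cent K b) := by
  let π : L →ₗ⁅K⁆ (L ⧸ LieAlgebra.center K L) :=
    { (LieSubmodule.Quotient.mk' (LieAlgebra.center K L) :
        L →ₗ[K] (L ⧸ LieAlgebra.center K L)) with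
      map_lie' := fun {x y} => LieSubmodule.Quotient.mk_bracket _ x y }
  have hs : Function.Surjective π := LieSubmodule.Quotient.surjective_mk' _
  have hk : ∀ x, π x = 0 ↔ ∀ y : L, ⁅y, x⁆ = 0 := fun x =>
    (LieSubmodule.Quotient.mk_eq_zero (N := LieAlgebra.center K L) (m := x)).trans
      (LieModule.mem_maxTrivSubmodule K L L x)
  haveI : FiniteDimensional K (L ⧸ LieAlgebra.center K L) :=
    Module.Finite.of_surjective (π : L →ₗ[K] _) hs
  haveI := trivRad hred π hs hk
  exact finrank_ineq_aux π hs hk a b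
end Main

variable (k : Type*) [Field k] [IsAlgClosed k] [CharZero k]
variable (g : Type*) [LieRing g] [LieAlgebra k g] [FiniteDimensional k g]

/-- The singular locus of the commuting variety is contained in its
irregular locus:  if `z = (a,b) ∈ C` is a point with `dim T_z(C) > dim g + rk g`, then
`dim (g_a ∩ g_b) > rk g`. -/
theorem singular_subset_irregular
    (hred : LieAlgebra.radical k g = LieAlgebra.center k g) (hnc : ¬IsLieAbelian g)
    (t : LieSubalgebra k g) (ht : t.IsCartanSubalgebra)
    (a b : g) (hab : (a, b) ∈ commSet k g)
    (hsing : Module.finrank k g + Module.finrank k ↥t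
      < Module.finrank k ↥(CV.tangent k (g × g) (commSet k g) (a, b))) :
    Module.finrank k ↥t < Module.finrank k ↥(cent k a ⊓ cent k b) := by
  have h1 := Submodule.finrank_mono (tangent_le_ker (K := k) a b)
  have h2 := finrank_ineq (K := k) hred a b
  have h3 := LinearMap.finrank_range_add_finrank_ker (dBr (K := k) a b)
  rw [Module.finrank_prod] at h3
  omega
end
end

section
/- Assume Conjecture (R) holds for g, i.e. the ideal of polynomial functions on g × g vanishing on C is generated by the functions (a,b) ↦ l([a,b]) for l ∈ g* (the coordinates of the commutator map). Then the singular locus equals the irregular locus: C^sing = C^irr. -/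
noncomputable section

section
open LieAlgebra Module
variable {k g s : Type*} [Field k] [LieRing g] [LieAlgebra k g] [FiniteDimensional k g]
  [LieRing s] [LieAlgebra k s] [FiniteDimensional k s] 

theorem aux_inner [CharZero k] [IsKilling k s] (π : g →ₗ⁅k⁆ s) (hπ : Function.Surjective π)
    (hk : ∀ a, π a = 0 → ∀ b : g, ⁅a, b⁆ = 0) (f : Dual k g) :
    ∃ w : s, ∀ a b : g, f ⁅a, b⁆ = killingForm k s w (π ⁅a, b⁆) := by
  obtain ⟨σ, hσ⟩ := (π : g →ₗ[k] s).exists_rightInverse_of_surjective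
    (LinearMap.range_eq_top.mpr hπ)
  have hσ' : ∀ u, π (σ u) = u := fun u => LinearMap.congr_fun hσ u
  have key : ∀ a b : g, ⁅σ (π a), σ (π b)⁆ = ⁅a, b⁆ := by
    intro a b
    have h1 := hk (σ (π a) - a) (by rw [map_sub, hσ', sub_self]) (σ (π b))
    have h2 := hk (σ (π b) - b) (by rw [map_sub, hσ', sub_self]) a
    rw [sub_lie, sub_eq_zero] at h1
    rw [h1, ← lie_skew, ← lie_skew a b, neg_inj]
    rwa [sub_lie, sub_eq_zero] at h2
  have nd := IsKilling.killingForm_nondegenerate k s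
  let K : s ≃ₗ[k] Dual k s := LinearMap.BilinForm.toDual (killingForm k s) nd
  have hK : ∀ u v, K u v = killingForm k s u v := fun u v => rfl
  let ω : s →ₗ[k] Dual k s := LinearMap.mk₂ k (fun u v => f ⁅σ u, σ v⁆)
    (by intros; simp) (by intros; simp) (by intros; simp) (by intros; simp)
  have hω : ∀ a b, ω (π a) (π b) = f ⁅a, b⁆ := fun a b => by
    change f ⁅σ (π a), σ (π b)⁆ = _; rw [key]
  let D0 : s →ₗ[k] s := K.symm.toLinearMap ∘ₗ ω
  have hD0 : ∀ u v, killingForm k s (D0 u) v = ω u v := fun u v => by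
    rw [← hK]; simp [D0]
  let D : LieDerivation k s s := 
    { D0 with
      leibniz' := by
        intro u v
        obtain ⟨a, rfl⟩ := hπ u
        obtain ⟨b, rfl⟩ := hπ v
        change D0 ⁅π a, π b⁆ = ⁅π a, D0 (π b)⁆ - ⁅π b, D0 (π a)⁆
        apply K.injective
        ext w
        obtain ⟨c, rfl⟩ := hπ w
        rw [map_sub, LinearMap.sub_apply, hK, hK, hK, LieModule.traceForm_apply_lie_apply',
          LieModule.traceForm_apply_lie_apply', hD0, hD0, hD0, ← LieHom.map_lie, ← LieHom.map_lie,
          ← LieHom.map_lie, hω, hω, hω, lie_lie]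
        simp
        ring }
  obtain ⟨w, hw⟩ := LieDerivation.IsKilling.exists_eq_ad D
  refine ⟨w, fun a b => ?_⟩
  have : D0 (π a) = ⁅w, π a⁆ := by
    change D (π a) = _
    rw [← hw]; simp
  rw [← hω, ← hD0, this, LieModule.traceForm_apply_lie_apply, LieHom.map_lie]

theorem aux_form [CharZero k] [IsKilling k s] (π : g →ₗ⁅k⁆ s) (hπ : Function.Surjective π)
    (hk : ∀ a, π a = 0 → ∀ b : g, ⁅a, b⁆ = 0) :
    ∃ B : g →ₗ[k] Dual k g, Function.Injective B ∧ ∀ a b c, B ⁅a, b⁆ c = B a ⁅b, c⁆ := by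
  let Z : Submodule k g := LinearMap.ker (π : g →ₗ[k] s)
  let W : Submodule k g := Submodule.span k {x | ∃ a b : g, ⁅a, b⁆ = x}
  have hd : Disjoint Z W := by
    rw [Submodule.disjoint_def]
    intro c hc hcW
    rw [← Module.forall_dual_apply_eq_zero_iff k]
    intro f
    obtain ⟨w, hw⟩ := aux_inner π hπ hk f
    have : ∀ x ∈ W, f x = killingForm k s w (π x) := by
      intro x hx
      have : W ≤ LinearMap.ker (f - (killingForm k s w) ∘ₗ (π : g →ₗ[k] s)) := by
        rw [Submodule.span_le]
        rintro _ ⟨a, b, rfl⟩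
        simp [hw]
      simpa [sub_eq_zero] using this hx
    have hc' : π c = 0 := hc
    rw [this c hcW, hc', map_zero]
  obtain ⟨W', hWW', hc⟩ := hd.symm.exists_isCompl
  let p : g →ₗ[k] Z := Submodule.projectionOnto Z W' hc.symm
  have hp1 : ∀ z : Z, p z = z := fun z => Submodule.projectionOnto_apply_left hc.symm z
  have hp2 : ∀ a b : g, p ⁅a, b⁆ = 0 := fun a b =>
    Submodule.projectionOnto_apply_of_mem_right hc.symm (hWW' (Submodule.subset_span ⟨a, b, rfl⟩))
  let e : Z ≃ₗ[k] Dual k Z := (Module.finBasis k Z).toDualEquiv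
  let B1 : g →ₗ[k] Dual k g := (killingForm k s).compl₁₂ (π : g →ₗ[k] s) (π : g →ₗ[k] s)
  let B2 : g →ₗ[k] Dual k g := (e.toLinearMap : Z →ₗ[k] Z →ₗ[k] k).compl₁₂ p p
  have hB : ∀ a b, (B1 + B2) a b = killingForm k s (π a) (π b) + e (p a) (p b) := fun a b => rfl
  refine ⟨B1 + B2, ?_, ?_⟩
  · rw [injective_iff_map_eq_zero]
    intro a ha
    have h : ∀ b, killingForm k s (π a) (π b) + e (p a) (p b) = 0 := fun b => by
      rw [← hB, ha]; rfl
    have h1 : p a = 0 := by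
      apply e.injective
      ext z
      have hz : π z = 0 := z.2
      have := h z
      rw [hz, map_zero, zero_add, hp1] at this
      rw [this]; simp
    have h2 : π a = 0 := by
      apply (LinearMap.BilinForm.toDual (killingForm k s)
        (IsKilling.killingForm_nondegenerate k s)).injective
      ext v
      obtain ⟨b, rfl⟩ := hπ v
      have := h b
      rw [h1, map_zero, LinearMap.zero_apply, add_zero] at this
      rw [map_zero]; exact this
    have := hp1 ⟨a, h2⟩
    rw [h1] at this
    exact (congrArg Subtype.val this).symm
  · intro a b c
    rw [hB, hB, hp2, hp2, LieHom.map_lie, LieHom.map_lie, LieModule.traceForm_apply_lie_apply]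
    simp

theorem aux_killing [CharZero k] (hred : radical k g = center k g) :
    IsKilling k (g ⧸ center k g) := by
  suffices HasTrivialRadical k (g ⧸ center k g) by infer_instance
  rw [hasTrivialRadical_iff_no_abelian_ideals]
  intro J hJ
  let q : g →ₗ⁅k⁆ (g ⧸ center k g) := 
    { (LieSubmodule.Quotient.mk' (center k g) : g →ₗ[k] _) with map_lie' := by intros; rfl }
  have hq : Function.Surjective q := LieSubmodule.Quotient.surjective_mk' _
  have hq0 : ∀ a, q a = 0 ↔ a ∈ center k g := fun a => LieSubmodule.Quotient.mk_eq_zero (center k g)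
  have h1 : ⁅J.comap q, J.comap q⁆ ≤ center k g := by
    rw [LieSubmodule.lieIdeal_oper_eq_span, LieSubmodule.lieSpan_le]
    rintro _ ⟨⟨a, ha⟩, ⟨b, hb⟩, rfl⟩
    rw [LieIdeal.mem_comap] at ha hb
    have := LieModule.IsTrivial.trivial (⟨q a, ha⟩ : J) (⟨q b, hb⟩ : J)
    change ⁅a, b⁆ ∈ center k g
    rw [← hq0, LieHom.map_lie]
    exact congrArg Subtype.val this
  have h2 : IsSolvable (J.comap q) := by
    refine IsSolvable.mk (R := k) (k := 2) ?_
    rw [LieIdeal.derivedSeries_eq_bot_iff, derivedSeriesOfIdeal_succ, derivedSeriesOfIdeal_succ,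
      derivedSeriesOfIdeal_zero, eq_bot_iff]
    refine (LieSubmodule.mono_lie h1 h1).trans ?_
    rw [LieSubmodule.lieIdeal_oper_eq_span, LieSubmodule.lieSpan_le]
    rintro _ ⟨⟨a, ha⟩, ⟨b, hb⟩, rfl⟩
    exact hb a
  have h3 : J.comap q ≤ center k g := by
    exact ((LieIdeal.solvable_iff_le_radical k g _).mp h2).trans hred.le
  rw [eq_bot_iff]
  intro u hu
  obtain ⟨a, rfl⟩ := hq u
  exact (hq0 a).mpr (h3 (by rwa [LieIdeal.mem_comap]))

theorem exists_form [CharZero k] (hred : radical k g = center k g) :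
    ∃ B : g →ₗ[k] Dual k g, Function.Injective B ∧ ∀ a b c, B ⁅a, b⁆ c = B a ⁅b, c⁆ := by
  have := aux_killing hred
  let q : g →ₗ⁅k⁆ (g ⧸ center k g) := 
    { (LieSubmodule.Quotient.mk' (center k g) : g →ₗ[k] _) with map_lie' := by intros; rfl }
  refine aux_form q (LieSubmodule.Quotient.surjective_mk' _) fun a ha b => ?_
  have : a ∈ center k g := (LieSubmodule.Quotient.mk_eq_zero (center k g)).mp ha
  rw [← lie_skew, this b, neg_zero]

/-- Differential of the commutator map. -/
def dcomm (k : Type*) {g : Type*} [Field k] [LieRing g] [LieAlgebra k g] (z : g × g) :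
    g × g →ₗ[k] g :=
  (LieAlgebra.ad k g z.1) ∘ₗ LinearMap.snd k g g - (LieAlgebra.ad k g z.2) ∘ₗ LinearMap.fst k g g

theorem finrank_ker_dcomm [CharZero k] (hred : radical k g = center k g) (z : g × g) :
    finrank k (LinearMap.ker (dcomm k z)) =
      finrank k g + finrank k ↥((LinearMap.ker (ad k g z.1)) ⊓ (LinearMap.ker (ad k g z.2))) := by
  obtain ⟨B, hB, hinv⟩ := exists_form hred
  have h1 := LinearMap.finrank_range_add_finrank_ker (dcomm k z)
  rw [finrank_prod] at h1
  have h2 := Subspace.finrank_add_finrank_dualAnnihilator_eq (LinearMap.range (dcomm k z))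
  have hBs : Function.Surjective B :=
    (LinearMap.injective_iff_surjective_of_finrank_eq_finrank
      (Subspace.dual_finrank_eq).symm).mp hB
  have h3 : (LinearMap.range (dcomm k z)).dualAnnihilator =
      ((LinearMap.ker (ad k g z.1)) ⊓ (LinearMap.ker (ad k g z.2))).map B := by
    ext f
    obtain ⟨a, rfl⟩ := hBs f
    rw [Submodule.mem_dualAnnihilator, Submodule.mem_map]
    have e : ∀ v, B a (dcomm k z v) = B ⁅a, z.1⁆ v.2 - B ⁅a, z.2⁆ v.1 := fun v => by
      simp [dcomm, hinv]
    constructor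
    · intro h
      refine ⟨a, ⟨?_, ?_⟩, rfl⟩
      · rw [SetLike.mem_coe, LinearMap.mem_ker, ad_apply, ← lie_skew, neg_eq_zero]
        apply hB
        ext c
        have := h _ ⟨(0, c), rfl⟩
        rw [e] at this
        simpa using this
      · rw [SetLike.mem_coe, LinearMap.mem_ker, ad_apply, ← lie_skew, neg_eq_zero]
        apply hB
        ext c
        have := h _ ⟨(c, 0), rfl⟩
        rw [e] at this
        simpa using this
    · rintro ⟨a', ⟨ha1, ha2⟩, h⟩
      obtain rfl := hB h
      rintro _ ⟨v, rfl⟩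
      have ha1 : ⁅z.1, a'⁆ = 0 := ha1
      have ha2 : ⁅z.2, a'⁆ = 0 := ha2
      rw [e, ← lie_skew, ha1, ← lie_skew, ha2]
      simp
  rw [h3, ← LinearEquiv.finrank_eq (Submodule.equivMapOfInjective B hB _)] at h2
  omega
end

namespace CV
section
variable {k : Type*} [Field k] {V : Type*} [AddCommGroup V] [Module k V] [FiniteDimensional k V]

theorem diffAt_apply (F : MvPolynomial (Module.Free.ChooseBasisIndex k V) k) (z v : V) :
    diffAt k V F z v = ∑ i, coordFn k V v i * evalP k V (MvPolynomial.pderiv i F) z := by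
  rw [diffAt, Module.Basis.constr_apply_fintype]
  rfl

theorem evalP_mul (F G : MvPolynomial (Module.Free.ChooseBasisIndex k V) k) (z : V) :
    evalP k V (F * G) z = evalP k V F z * evalP k V G z := by
  simp [evalP]

theorem diffAt_add (F G : MvPolynomial (Module.Free.ChooseBasisIndex k V) k) (z v : V) :
    diffAt k V (F + G) z v = diffAt k V F z v + diffAt k V G z v := by
  simp [diffAt_apply, evalP, mul_add, Finset.sum_add_distrib]

theorem diffAt_mul (F G : MvPolynomial (Module.Free.ChooseBasisIndex k V) k) (z v : V) :
    diffAt k V (F * G) z v =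
      evalP k V F z * diffAt k V G z v + evalP k V G z * diffAt k V F z v := by
  simp only [diffAt_apply, Finset.mul_sum, ← Finset.sum_add_distrib]
  refine Finset.sum_congr rfl fun i _ => ?_
  simp [evalP, MvPolynomial.pderiv_mul]
  ring

/-- Restriction of a polynomial to a line. -/
def lineP (F : MvPolynomial (Module.Free.ChooseBasisIndex k V) k) (z v : V) : Polynomial k :=
  MvPolynomial.aeval (fun i => Polynomial.C (coordFn k V z i) +
    Polynomial.X * Polynomial.C (coordFn k V v i)) F

theorem eval_lineP (F : MvPolynomial (Module.Free.ChooseBasisIndex k V) k) (z v : V) (c : k) :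
    (lineP F z v).eval c = evalP k V F (z + c • v) := by
  induction F using MvPolynomial.induction_on with
  | C a => simp [lineP, evalP]
  | add p q hp hq => simp_all [lineP, evalP]
  | mul_X p i hp =>
    rw [evalP_mul, ← hp]
    simp [lineP, evalP, coordFn]
    left
    ring

theorem deriv_lineP (F : MvPolynomial (Module.Free.ChooseBasisIndex k V) k) (z v : V) :
    (Polynomial.derivative (lineP F z v)).eval 0 = diffAt k V F z v := by
  classical
  induction F using MvPolynomial.induction_on with
  | C a => simp [lineP, evalP, diffAt_apply]
  | add p q hp hq =>
    rw [diffAt_add, ← hp, ← hq]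
    simp [lineP]
  | mul_X p i hp =>
    have hX : diffAt k V (MvPolynomial.X i) z v = coordFn k V v i := by
      simp [diffAt_apply, MvPolynomial.pderiv_X, evalP, Pi.single_apply, apply_ite]
    have h0 := eval_lineP p z v 0
    rw [zero_smul, add_zero] at h0
    rw [diffAt_mul, ← hp, hX, ← h0]
    simp [lineP, evalP]
    ring

end
end CV

section
variable {k g : Type*} [Field k] [LieRing g] [LieAlgebra k g] [FiniteDimensional k g]

theorem diffAt_of_rep [CharZero k] (F : MvPolynomial (Module.Free.ChooseBasisIndex k (g × g)) k)
    (l : Module.Dual k g) (hF : ∀ z : g × g, CV.evalP k (g × g) F z = l ⁅z.1, z.2⁆)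
    (z v : g × g) : CV.diffAt k (g × g) F z v = l (dcomm k z v) := by
  have : CV.lineP F z v = Polynomial.C (l ⁅z.1, z.2⁆) + Polynomial.X * Polynomial.C
      (l (dcomm k z v)) + Polynomial.X ^ 2 * Polynomial.C (l ⁅v.1, v.2⁆) := by
    apply Polynomial.funext
    intro c
    rw [CV.eval_lineP, hF]
    simp [dcomm]
    rw [← lie_skew z.2 v.1, map_neg]
    ring
  rw [← CV.deriv_lineP, this]
  simp

theorem exists_rep (l : Module.Dual k g) :
    ∃ F : MvPolynomial (Module.Free.ChooseBasisIndex k (g × g)) k,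
      ∀ z : g × g, CV.evalP k (g × g) F z = l ⁅z.1, z.2⁆ := by
  let b := Module.Free.chooseBasis k (g × g)
  refine ⟨∑ i, ∑ j, MvPolynomial.C (l ⁅(b i).1, (b j).2⁆) * MvPolynomial.X i * MvPolynomial.X j,
    fun z => ?_⟩
  have h1 : z.1 = ∑ i, b.repr z i • (b i).1 := by
    have := congrArg Prod.fst (b.sum_repr z)
    rw [Prod.fst_sum] at this
    exact this.symm
  have h2 : z.2 = ∑ i, b.repr z i • (b i).2 := by
    have := congrArg Prod.snd (b.sum_repr z)
    rw [Prod.snd_sum] at this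
    exact this.symm
  conv_rhs => rw [h1, h2]
  simp only [CV.evalP, map_sum, sum_lie, lie_sum]
  rw [Finset.sum_comm]
  refine Finset.sum_congr rfl fun i _ => ?_
  refine Finset.sum_congr rfl fun j _ => ?_
  simp [CV.coordFn, b]
  ring

theorem tangent_eq [CharZero k]
    (hR : {F | ∀ z ∈ commSet k g, CV.evalP k (g × g) F z = 0} =
      ↑(Ideal.span {F : MvPolynomial (Module.Free.ChooseBasisIndex k (g × g)) k |
          ∃ l : Module.Dual k g, ∀ z : g × g, CV.evalP k (g × g) F z = l ⁅z.1, z.2⁆}))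
    (z : g × g) (hz : z ∈ commSet k g) :
    CV.tangent k (g × g) (commSet k g) z = LinearMap.ker (dcomm k z) := by
  have hz0 : ⁅z.1, z.2⁆ = 0 := hz
  ext v
  rw [CV.tangent, hR]
  simp only [Submodule.mem_iInf, LinearMap.mem_ker]
  constructor
  · intro h
    rw [← Module.forall_dual_apply_eq_zero_iff k]
    intro l
    obtain ⟨F, hF⟩ := exists_rep l
    rw [← diffAt_of_rep F l hF]
    exact h F (Ideal.subset_span ⟨l, hF⟩)
  · intro h F hF
    rw [SetLike.mem_coe] at hF
    have hs : CV.evalP k (g × g) F z = 0 ∧ CV.diffAt k (g × g) F z v = 0 := by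
      induction hF using Submodule.span_induction with
      | mem F hF =>
        obtain ⟨l, hl⟩ := hF
        rw [hl, diffAt_of_rep F l hl, h, hz0]
        simp
      | zero => simp [CV.evalP, CV.diffAt_apply]
      | add p q _ _ hp hq =>
        rw [CV.diffAt_add, hp.2, hq.2]
        refine ⟨?_, by simp⟩
        have e1 := hp.1
        have e2 := hq.1
        simp only [CV.evalP] at e1 e2 ⊢
        rw [map_add, e1, e2, add_zero]
      | smul a p _ hp =>
        rw [smul_eq_mul, CV.diffAt_mul, CV.evalP_mul, hp.1, hp.2]
        simp
    exact hs.2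

end

variable (k : Type*) [Field k] [IsAlgClosed k] [CharZero k]
variable (g : Type*) [LieRing g] [LieAlgebra k g] [FiniteDimensional k g]

/-- Assume Conjecture (R) holds for `g`: the ideal of polynomial functions
on `g × g` vanishing on the commuting variety `C` is generated by the coordinates of the
commutator map, i.e. by the polynomials representing the functions `(a,b) ↦ l ([a,b])` for
`l ∈ g*`.  Then the singular locus of `C` equals its irregular locus. -/
theorem singular_eq_irregular_of_conjR
    (hred : LieAlgebra.radical k g = LieAlgebra.center k g) (hnc : ¬IsLieAbelian g)
    (t : LieSubalgebra k g) (ht : t.IsCartanSubalgebra)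
    (hR : {F | ∀ z ∈ commSet k g, CV.evalP k (g × g) F z = 0} =
      ↑(Ideal.span {F : MvPolynomial (Module.Free.ChooseBasisIndex k (g × g)) k |
          ∃ l : Module.Dual k g, ∀ z : g × g, CV.evalP k (g × g) F z = l ⁅z.1, z.2⁆})) :
    {z ∈ commSet k g |
        Module.finrank k g + Module.finrank k ↥t
          < Module.finrank k ↥(CV.tangent k (g × g) (commSet k g) z)} =
      {z ∈ commSet k g |
        Module.finrank k ↥t < Module.finrank k ↥(cent k z.1 ⊓ cent k z.2)} := by
  ext z
  simp only [Set.mem_ofPred_eq]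
  refine and_congr_right fun hz => ?_
  rw [tangent_eq hR z hz, finrank_ker_dcomm hred z, Nat.add_lt_add_iff_left]
  rfl
end
end

section
/- The irregular locus of the commuting variety has codimension at least 2: codim_C C^irr ≥ 2, i.e. every irreducible component X of C^irr satisfies dim X ≤ dim g + rk g − 2. -/
noncomputable section

variable (k : Type*) [Field k] [IsAlgClosed k] [CharZero k]
variable (g : Type*) [LieRing g] [LieAlgebra k g] [FiniteDimensional k g]

/-- The irregular locus of the commuting variety:  points `(x,y) ∈ C` with
`dim (g_x ∩ g_y) > rk g`. -/
def Cirr (t : LieSubalgebra k g) : Set (g × g) :=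
  {z ∈ commSet k g | Module.finrank k ↥t < Module.finrank k ↥(cent k z.1 ⊓ cent k z.2)}

namespace IrrCodim

section LinAlg

variable {K V : Type*} [Field K] [AddCommGroup V] [Module K V]

lemma ker_sq_of_semisimple {f : Module.End K V} (hf : f.IsSemisimple) {v : V}
    (h : f (f v) = 0) : f v = 0 := by
  have h1 : v ∈ f.genEigenspace 0 2 := by
    have : (2 : ℕ∞) = ((2 : ℕ) : ℕ∞) := rfl
    rw [this, Module.End.mem_genEigenspace_nat]
    simp [pow_two, h]
  have h2 := hf.isFinitelySemisimple.genEigenspace_eq_eigenspace 0 (k := 2) (by norm_num)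
  rw [h2] at h1
  simpa using h1

lemma exists_ker_add_range [FiniteDimensional K V] {f : Module.End K V} (hf : f.IsSemisimple)
    (v : V) : ∃ a b, f a = 0 ∧ v = a + f b := by
  have hd : Disjoint (LinearMap.ker f) (LinearMap.range f) := by
    rw [Submodule.disjoint_def]
    rintro x hx ⟨y, rfl⟩
    exact ker_sq_of_semisimple hf hx
  have hc : LinearMap.ker f ⊔ LinearMap.range f = ⊤ := by
    apply Submodule.eq_top_of_disjoint _ _ _ hd
    rw [add_comm, LinearMap.finrank_range_add_finrank_ker]
  have hv : v ∈ LinearMap.ker f ⊔ LinearMap.range f := by rw [hc]; trivial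
  obtain ⟨a, ha, c, ⟨b, rfl⟩, rfl⟩ := Submodule.mem_sup.mp hv
  exact ⟨a, b, ha, rfl⟩

lemma pow_mul_comm_aux {N C Z : Module.End K V}
    (hZ : N * C - C * N = Z) (hc : N * Z = Z * N) (i : ℕ) :
    N ^ (i + 1) * C = C * N ^ (i + 1) + ((i : K) + 1) • (Z * N ^ i) := by
  induction i with
  | zero => simp [← hZ]
  | succ i ih =>
    have : N ^ (i + 1 + 1) * C = N * (N ^ (i + 1) * C) := by rw [pow_succ' N (i+1)]; noncomm_ring
    rw [this, ih, mul_add, ← mul_assoc, eq_add_of_sub_eq hZ, mul_smul_comm, ← mul_assoc, hc,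
      add_mul, mul_assoc C, ← pow_succ', mul_assoc Z N, ← pow_succ']
    push_cast
    module

/-- If `N` is nilpotent and commutes with `Z = [N, C]` then `Z` is nilpotent. -/
lemma isNilpotent_comm [CharZero K] {N C Z : Module.End K V}
    (hN : IsNilpotent N) (hZ : N * C - C * N = Z) (hc : N * Z = Z * N) :
    IsNilpotent Z := by
  obtain ⟨p, hp⟩ := hN
  have hcm : Commute N Z := hc
  have key : ∀ i : ℕ, (∃ e, Z ^ e * N ^ i = 0) → IsNilpotent Z := by
    intro i
    induction i with
    | zero => rintro ⟨e, he⟩; exact ⟨e, by simpa using he⟩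
    | succ i ih =>
      rintro ⟨e, he⟩
      apply ih
      refine ⟨2 * e + 1, ?_⟩
      have h := congrArg (fun f => Z ^ e * f * Z ^ e) (pow_mul_comm_aux hZ hc i)
      have e1 : Z ^ e * (N ^ (i + 1) * C) * Z ^ e = 0 := by
        rw [← mul_assoc, he]; simp
      have e2 : Z ^ e * (C * N ^ (i + 1)) * Z ^ e = 0 := by
        rw [mul_assoc, mul_assoc C, (hcm.pow_pow (i + 1) e).eq, he]; simp
      rw [e1, mul_add, add_mul, e2, zero_add, mul_smul_comm, smul_mul_assoc] at h
      have h' := (smul_eq_zero.mp h.symm).resolve_left (by exact_mod_cast Nat.succ_ne_zero i)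
      rw [mul_assoc, mul_assoc, (hcm.pow_pow i e).eq] at h'
      calc Z ^ (2 * e + 1) * N ^ i = Z ^ e * (Z * (Z ^ e * N ^ i)) := by
            rw [two_mul, add_assoc, pow_add, pow_succ' Z e]; noncomm_ring
        _ = 0 := h'
  exact key p ⟨0, by simp [hp]⟩

lemma isNilpotent_mul [CharZero K] {N C Z : Module.End K V}
    (hN : IsNilpotent N) (hZ : N * C - C * N = Z) (hc : N * Z = Z * N) :
    IsNilpotent (N * C) := by
  obtain ⟨q, hq⟩ := isNilpotent_comm hN hZ hc
  obtain ⟨p, hp⟩ := hN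
  have hcp : ∀ i : ℕ, N ^ i * Z = Z * N ^ i := fun i => by
    have : Commute N Z := hc
    exact (this.pow_left i).eq
  have h1 : ∀ i : ℕ, N ^ (i + 1) * C = C * N ^ (i + 1) + ((i : K) + 1) • (Z * N ^ i) :=
    pow_mul_comm_aux hZ hc
  have h2 : ∀ i : ℕ, ∀ v, (N ^ (i + 1)) v = 0 → (N ^ i) ((N * C) v) = ((i : K) + 1) • Z ((N ^ i) v) := by
    intro i v hv
    have := congrArg (fun f => f v) (h1 i)
    simp only [Module.End.mul_apply, LinearMap.add_apply, hv, LinearMap.smul_apply, map_zero,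
      zero_add] at this
    rw [← this, pow_succ]; rfl
  have h3 : ∀ i : ℕ, ∀ v, (N ^ (i + 1)) v = 0 → (N ^ (i+1)) ((N * C) v) = 0 := by
    intro i v hv
    rw [pow_succ', Module.End.mul_apply, h2 i v hv, map_smul, ← Module.End.mul_apply, hc,
      Module.End.mul_apply, ← Module.End.mul_apply N, ← pow_succ', hv]
    simp
  have h4 : ∀ i m : ℕ, ∀ v, (N ^ (i + 1)) v = 0 →
      (N ^ (i+1)) (((N * C) ^ m) v) = 0 ∧
      (N ^ i) (((N * C) ^ m) v) = (((i : K) + 1) ^ m) • (Z ^ m) ((N ^ i) v) := by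
    intro i m v hv
    induction m with
    | zero => simp [hv]
    | succ m ih =>
      rw [pow_succ' (N * C), Module.End.mul_apply]
      refine ⟨h3 i _ ih.1, ?_⟩
      rw [h2 i _ ih.1, ih.2, map_smul, smul_smul, ← Module.End.mul_apply, ← pow_succ', ← pow_succ']
  have h5 : ∀ i v, (N ^ i) v = 0 → ((N * C) ^ (q * i)) v = 0 := by
    intro i
    induction i with
    | zero => intro v hv; simpa using hv
    | succ i ih =>
      intro v hv
      rw [mul_add, mul_one, pow_add, Module.End.mul_apply]
      apply ih
      rw [(h4 i q v hv).2, hq]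
      simp
  refine ⟨q * p, ?_⟩
  ext v
  rw [h5 p v (by simp [hp])]
  simp

end LinAlg
end IrrCodim

set_option linter.unusedSectionVars false
set_option linter.unusedVariables false
namespace IrrCodim
section Jordan
open LieAlgebra LieModule Module
variable {K G : Type*} [Field K] [IsAlgClosed K] [CharZero K] [LieRing G] [LieAlgebra K G]
  [FiniteDimensional K G] [IsKilling K G]

lemma ad_inj {x y : G} (h : ad K G x = ad K G y) : x = y := by
  have := LieAlgebra.center_eq_bot (R := K) (L := G)
  rw [← sub_eq_zero, ← LieSubmodule.mem_bot (R := K) (L := G), ← this, LieModule.mem_maxTrivSubmodule]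
  intro z
  have h2 := congrArg (fun f => f z) h
  simp only [ad_apply] at h2
  rw [← lie_skew, sub_lie, h2, sub_self, neg_zero]

open Module.End in
lemma jordan (x : G) : ∃ s n : G, x = s + n ∧ (ad K G s).IsSemisimple ∧ IsNilpotent (ad K G n) ∧
    ⁅s, n⁆ = 0 ∧ ∀ c : G, ⁅x, c⁆ = 0 → ⁅s, c⁆ = 0 := by
  obtain ⟨N, -, S, hS₀, hN, hS, hSN⟩ := (ad K G x).exists_isNilpotent_isSemisimple
  replace hS₀ : Commute (ad K G x) S := Algebra.commute_of_mem_adjoin_self hS₀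
  rw [eq_sub_of_add_eq hSN.symm] at hN
  have aux {α : K} {y : G} (hy : y ∈ (ad K G x).maxGenEigenspace α) : S y = α • y := by
    rw [maxGenEigenspace_eq] at hy
    rw [apply_eq_of_mem_of_comm_of_isFinitelySemisimple_of_isNil hy hS₀ hS.isFinitelySemisimple hN]
  have h_der (y z : G) (α β : K) (hy : y ∈ (ad K G x).maxGenEigenspace α)
      (hz : z ∈ (ad K G x).maxGenEigenspace β) :
      S ⁅y, z⁆ = ⁅S y, z⁆ + ⁅y, S z⁆ := by
    have hyz : ⁅y, z⁆ ∈ (ad K G x).maxGenEigenspace (α + β) :=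
      lie_mem_maxGenEigenspace_toEnd hy hz
    rw [aux hy, aux hz, aux hyz, smul_lie, lie_smul, ← add_smul]
  replace h_der (y z : G) : S ⁅y, z⁆ = ⁅S y, z⁆ + ⁅y, S z⁆ := by
    have hy : y ∈ ⨆ α : K, (ad K G x).maxGenEigenspace α := by
      rw [Module.End.iSup_maxGenEigenspace_eq_top]; trivial
    have hz : z ∈ ⨆ α : K, (ad K G x).maxGenEigenspace α := by
      rw [Module.End.iSup_maxGenEigenspace_eq_top]; trivial
    induction hy using Submodule.iSup_induction' with
    | mem α y hy =>
      induction hz using Submodule.iSup_induction' with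
      | mem β z hz => exact h_der y z α β hy hz
      | zero => simp
      | add _ _ _ _ h h' => simp only [lie_add, map_add, h, h']; abel
    | zero => simp
    | add _ _ _ _ h h' => simp only [add_lie, map_add, h, h']; abel
  replace h_der : ∀ y z : G, S ⁅y, z⁆ = ⁅y, S z⁆ - ⁅z, S y⁆ := by
    simp_rw [← lie_skew (S _) _, add_comm, ← sub_eq_add_neg] at h_der; assumption
  let S' : LieDerivation K G G := ⟨S, h_der⟩
  obtain ⟨y, hy⟩ := LieDerivation.IsKilling.exists_eq_ad S'
  replace hy : S = ad K G y := by rw [← LieDerivation.coe_ad_apply_eq_ad_apply y, hy]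
  have hyc : ∀ c : G, ⁅x, c⁆ = 0 → ⁅y, c⁆ = 0 := by
    intro c hc
    have : c ∈ (ad K G x).maxGenEigenspace 0 := by
      rw [Module.End.mem_maxGenEigenspace]
      exact ⟨1, by simpa using hc⟩
    have := aux this
    rw [hy] at this
    simpa using this
  refine ⟨y, x - y, by abel, hy ▸ hS, ?_, ?_, hyc⟩
  · rw [map_sub, ← hy]; exact hN
  · rw [lie_sub, lie_self, sub_zero]
    exact hyc x (lie_self x)


lemma perp_range {V : Type*} [AddCommGroup V] [Module K V] [FiniteDimensional K V]
    (b : LinearMap.BilinForm K V) (hb : b.Nondegenerate) (hs : b.IsRefl) (f f' : Module.End K V)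
    (hf : ∀ v w, b (f v) w = b v (f' w)) (v : V) (hv : ∀ c, f' c = 0 → b v c = 0) :
    ∃ w, v = f w := by
  have h1 := LinearMap.BilinForm.orthogonal_orthogonal hb hs (LinearMap.range f)
  have h2 : v ∈ b.orthogonal (b.orthogonal (LinearMap.range f)) := by
    rw [LinearMap.BilinForm.mem_orthogonal_iff]
    intro c hc
    apply hs
    apply hv
    rw [LinearMap.BilinForm.mem_orthogonal_iff] at hc
    apply hb.1
    intro w
    apply hs
    rw [← hf]
    exact hc _ ⟨w, rfl⟩
  rw [h1] at h2
  obtain ⟨w, rfl⟩ := h2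
  exact ⟨w, rfl⟩

lemma B_inv (x y z : G) : killingForm K G ⁅x, y⁆ z = killingForm K G x ⁅y, z⁆ :=
  LieModule.traceForm_apply_lie_apply K G G x y z

lemma B_comm (x y : G) : killingForm K G x y = killingForm K G y x :=
  LieModule.traceForm_comm K G G x y

lemma B_nil {n c : G} (hn : _root_.IsNilpotent (ad K G n)) (h : ⁅n, ⁅n, c⁆⁆ = 0) :
    killingForm K G n c = 0 := by
  rw [killingForm_apply_apply]
  have : _root_.IsNilpotent (ad K G n * ad K G c) := by
    refine isNilpotent_mul (Z := ad K G ⁅n, c⁆) hn ?_ ?_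
    · ext w; simp
    · rw [← sub_eq_zero]
      have : ad K G n * ad K G ⁅n, c⁆ - ad K G ⁅n, c⁆ * ad K G n = ad K G ⁅n, ⁅n, c⁆⁆ := by
        ext w; simp only [LinearMap.sub_apply, Module.End.mul_apply, ad_apply]
        rw [lie_lie n ⁅n, c⁆]
      rw [this, h, map_zero]
  exact (LinearMap.isNilpotent_trace_of_isNilpotent this).eq_zero

lemma nondeg_cent {s : G} (hs : (ad K G s).IsSemisimple) {w : G} (hw : ⁅s, w⁆ = 0)
    (h : ∀ c : G, ⁅s, c⁆ = 0 → killingForm K G w c = 0) : w = 0 := by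
  apply (IsKilling.killingForm_nondegenerate K G).1
  intro v
  obtain ⟨a, b, ha, rfl⟩ := exists_ker_add_range hs v
  rw [map_add, h a ha, ad_apply, ← B_inv, ← lie_skew, hw]
  simp

/-- the Killing form restricted to the centralizer of `s` -/
def Bl (s : G) : LinearMap.BilinForm K (LinearMap.ker (ad K G s)) :=
  (killingForm K G).restrict (LinearMap.ker (ad K G s))

lemma Bl_refl (s : G) : (Bl (K := K) s).IsRefl := by
  intro v w h
  change killingForm K G v w = 0 at h
  change killingForm K G w v = 0
  rw [B_comm, h]

lemma Bl_nondeg {s : G} (hs : (ad K G s).IsSemisimple) : (Bl (K := K) s).Nondegenerate := by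
  have : ∀ v : LinearMap.ker (ad K G s), (∀ w, Bl (K := K) s v w = 0) → v = 0 := by
    intro v hv
    ext
    exact nondeg_cent (K := K) hs v.2 (fun c hc => hv ⟨c, hc⟩)
  exact ⟨this, fun v hv => this v fun w => Bl_refl s _ _ (hv w)⟩

lemma lie_cent {s a b : G} (ha : ⁅s, a⁆ = 0) (hb : ⁅s, b⁆ = 0) : ⁅s, ⁅a, b⁆⁆ = 0 := by
  rw [leibniz_lie, ha, hb]; simp

/-- `ad n` restricted to the centralizer of `s`. -/
def adl {s n : G} (hn : ⁅s, n⁆ = 0) : Module.End K (LinearMap.ker (ad K G s)) :=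
  (ad K G n).restrict (fun c hc => lie_cent hn hc)

lemma exists_of_perp {s n v : G} (hs : (ad K G s).IsSemisimple) (hn : ⁅s, n⁆ = 0)
    (hv : ⁅s, v⁆ = 0) (h : ∀ c : G, ⁅s, c⁆ = 0 → ⁅n, c⁆ = 0 → killingForm K G v c = 0) :
    ∃ w, ⁅s, w⁆ = 0 ∧ v = ⁅n, w⁆ := by
  obtain ⟨w, hw⟩ := perp_range (Bl (K := K) s) (Bl_nondeg hs) (Bl_refl s) (adl hn) (-(adl hn))
    (fun a b => by
      change killingForm K G ⁅n, a.1⁆ b.1 = killingForm K G a.1 (-⁅n, b.1⁆)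
      rw [← lie_skew, map_neg, LinearMap.neg_apply, B_inv, map_neg]) ⟨v, hv⟩
    (fun c hc => h c c.2 (by
      have := congrArg Subtype.val hc
      change -⁅n, c.1⁆ = 0 at this
      exact neg_eq_zero.mp this))
  exact ⟨w, w.2, congrArg Subtype.val hw⟩

lemma exists_h {s n : G} (hs : (ad K G s).IsSemisimple) (hn : ⁅s, n⁆ = 0)
    (hnil : _root_.IsNilpotent (ad K G n)) :
    ∃ y h : G, ⁅s, y⁆ = 0 ∧ ⁅s, h⁆ = 0 ∧ h = ⁅n, y⁆ ∧ ⁅h, n⁆ = (2 : K) • n := by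
  obtain ⟨w, hw⟩ := perp_range (Bl (K := K) s) (Bl_nondeg hs) (Bl_refl s) (adl hn * adl hn)
    (adl hn * adl hn)
    (fun a b => by
      change killingForm K G ⁅n, ⁅n, a.1⁆⁆ b.1 = killingForm K G a.1 ⁅n, ⁅n, b.1⁆⁆
      rw [← lie_skew, map_neg, LinearMap.neg_apply, B_inv, ← lie_skew, map_neg,
        LinearMap.neg_apply, B_inv, neg_neg]) ⟨n, hn⟩
    (fun c hc => B_nil hnil (congrArg Subtype.val hc))
  have hw2 : n = ⁅n, ⁅n, w.1⁆⁆ := congrArg Subtype.val hw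
  refine ⟨(-2 : K) • w.1, ⁅n, (-2 : K) • w.1⁆, ?_, ?_, rfl, ?_⟩
  · rw [lie_smul, show ⁅s, w.1⁆ = 0 from w.2, smul_zero]
  · apply lie_cent hn
    rw [lie_smul, show ⁅s, w.1⁆ = 0 from w.2, smul_zero]
  · rw [lie_smul, smul_lie, ← lie_skew, ← hw2]
    simp

lemma sl2_aux {V : Type*} [AddCommGroup V] [Module K V] {N H Y : Module.End K V}
    (h1 : N * Y = Y * N + H) (h2 : N * H = H * N - (2 : K) • N) (i : ℕ) :
    N ^ (i + 1) * Y = Y * N ^ (i + 1) + ((i : K) + 1) • (H * N ^ i - (i : K) • N ^ i) := by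
  induction i with
  | zero => simp [h1]
  | succ i ih =>
    have : N ^ (i + 1 + 1) * Y = N * (N ^ (i + 1) * Y) := by rw [pow_succ' N (i+1)]; noncomm_ring
    rw [this, ih, mul_add, ← mul_assoc, h1, mul_smul_comm, mul_sub, ← mul_assoc, h2,
      mul_smul_comm, add_mul, mul_assoc Y, ← pow_succ', ← pow_succ', sub_mul, mul_assoc H N,
      ← pow_succ', smul_mul_assoc, ← pow_succ']
    push_cast
    module

lemma surj_l {s n y h : G} (hn : ⁅s, n⁆ = 0)
    (hnil : _root_.IsNilpotent (ad K G n)) (hy : ⁅s, y⁆ = 0) (hh : ⁅s, h⁆ = 0) (hny : h = ⁅n, y⁆)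
    (hhn : ⁅h, n⁆ = (2 : K) • n) (c : G) (hc : ⁅s, c⁆ = 0) (hc' : ⁅n, c⁆ = 0) :
    ∃ d, ⁅s, d⁆ = 0 ∧ ⁅n, d⁆ = 0 ∧ c = (2 : K) • d + ⁅h, d⁆ := by
  let U : Submodule K G := LinearMap.ker (ad K G s) ⊓ LinearMap.ker (ad K G n)
  have hU : ∀ d ∈ U, ((2 : K) • LinearMap.id + ad K G h : Module.End K G) d ∈ U := by
    rintro d ⟨hd1, hd2⟩
    have hd1 : ⁅s, d⁆ = 0 := hd1
    have hd2 : ⁅n, d⁆ = 0 := hd2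
    have hnh : ⁅n, h⁆ = -((2 : K) • n) := by rw [← hhn, lie_skew]
    refine ⟨?_, ?_⟩
    · change ⁅s, (2 : K) • d + ⁅h, d⁆⁆ = 0
      rw [lie_add, lie_smul, hd1, lie_cent hh hd1]; simp
    · change ⁅n, (2 : K) • d + ⁅h, d⁆⁆ = 0
      rw [lie_add, lie_smul, hd2, leibniz_lie, hnh, hd2]
      simp [hd2]
  let F : Module.End K U := ((2 : K) • LinearMap.id + ad K G h : Module.End K G).restrict hU
  have hF : Function.Injective F := by
    rw [← LinearMap.ker_eq_bot, LinearMap.ker_eq_bot']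
    rintro ⟨d, hd1, hd2⟩ hd
    have hd2 : ⁅n, d⁆ = 0 := hd2
    have hd3 : (2 : K) • d + ⁅h, d⁆ = 0 := congrArg Subtype.val hd
    have key := sl2_aux (K := K) (N := ad K G n) (H := ad K G h) (Y := ad K G y)
      (by ext w; simp [hny])
      (by
        ext w
        simp only [Module.End.mul_apply, ad_apply, LinearMap.sub_apply, LinearMap.smul_apply]
        rw [leibniz_lie n h, ← lie_skew n h, hhn]
        simp [sub_eq_neg_add])
    have hi : ∀ i : ℕ, ∃ e, d = ((ad K G n) ^ i) e := by
      intro i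
      induction i with
      | zero => exact ⟨d, by simp⟩
      | succ i ih =>
        obtain ⟨e, he⟩ := ih
        have k1 := congrArg (fun f => f e) (key i)
        simp only [Module.End.mul_apply, LinearMap.add_apply, LinearMap.sub_apply,
          LinearMap.smul_apply, ← he] at k1
        rw [pow_succ' _ i, Module.End.mul_apply, Module.End.mul_apply, ← he] at k1
        simp only [ad_apply, hd2, lie_zero, zero_add] at k1
        have hd4 : ⁅h, d⁆ = -((2 : K) • d) := (neg_eq_of_add_eq_zero_right hd3).symm
        rw [hd4] at k1
        have hne : ((i : K) + 1) * (-2 - i) ≠ 0 := by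
          apply mul_ne_zero
          · exact_mod_cast Nat.succ_ne_zero i
          · intro h0
            have : ((i + 2 : ℕ) : K) = 0 := by push_cast; linear_combination -h0
            exact absurd this (Nat.cast_ne_zero.mpr (Nat.succ_ne_zero (i + 1)))
        refine ⟨(((i : K) + 1) * (-2 - i))⁻¹ • ⁅y, e⁆, ?_⟩
        rw [pow_succ', Module.End.mul_apply, map_smul, map_smul, ad_apply, k1, eq_inv_smul_iff₀ hne]
        module
    obtain ⟨p, hp⟩ := hnil
    obtain ⟨e, he⟩ := hi p
    ext
    simpa [hp] using he
  have hsurj := LinearMap.injective_iff_surjective.mp hF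
  obtain ⟨⟨d, hd1, hd2⟩, hd⟩ := hsurj ⟨c, hc, hc'⟩
  exact ⟨d, hd1, hd2, (congrArg Subtype.val hd).symm⟩

/-- The properties of a derivation of the ground field acting on coordinates. -/
structure IsDer (K : Type*) {G : Type*} [Field K] [LieRing G] [LieAlgebra K G]
    (D : G → G) : Prop where
  add : ∀ a b, D (a + b) = D a + D b
  lie : ∀ a b, D ⁅a, b⁆ = ⁅D a, b⁆ + ⁅a, D b⁆
  form : ∀ a b, killingForm K G a b = 0 → killingForm K G (D a) b + killingForm K G a (D b) = 0

lemma IsDer.zero {D : G → G} (hD : IsDer K D) : D 0 = 0 := by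
  have := hD.add 0 0
  simpa using this

lemma IsDer.add_ad {D : G → G} (hD : IsDer K D) (w : G) : IsDer K (fun a => D a + ⁅w, a⁆) where
  add a b := by rw [hD.add, lie_add]; abel
  lie a b := by simp only [hD.lie, lie_add, add_lie, leibniz_lie w a b]; abel
  form a b h := by
    simp only [map_add, LinearMap.add_apply]
    have : killingForm K G ⁅w, a⁆ b + killingForm K G a ⁅w, b⁆ = 0 := by
      rw [← B_inv, ← lie_skew a w, map_neg, LinearMap.neg_apply, add_neg_cancel]
    linear_combination hD.form a b h + this

lemma claim1_aux {s n : G} (hs : (ad K G s).IsSemisimple) (hn : ⁅s, n⁆ = 0)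
    (hnil : _root_.IsNilpotent (ad K G n)) {D : G → G} (hD : IsDer K D) (hDs : ⁅s, D s⁆ = 0) :
    (∀ c : G, ⁅s, c⁆ = 0 → ⁅D s, c⁆ = 0) ∧ ∃ w, ⁅s, w⁆ = 0 ∧ D n = ⁅n, w⁆ := by
  have h1 : ∀ b c : G, ⁅s, b⁆ = 0 → killingForm K G s ⁅b, c⁆ = 0 := by
    intro b c hb
    rw [← B_inv, hb]; simp
  have hz : ∀ c : G, ⁅s, c⁆ = 0 → ⁅D s, c⁆ = 0 := by
    intro b hb
    apply nondeg_cent (K := K) hs (lie_cent hDs hb)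
    intro c hc
    rw [B_inv]
    have := hD.form s ⁅b, c⁆ (h1 b c hb)
    rw [hD.lie, map_add, h1 b _ hb, ← lie_skew (D b), map_neg, h1 c _ hc] at this
    simpa using this
  refine ⟨hz, ?_⟩
  have hl : ∀ c : G, ⁅s, c⁆ = 0 → ⁅s, D c⁆ = 0 := by
    intro c hc
    have := hD.lie s c
    rw [hc, hD.zero, hz c hc, zero_add] at this
    exact this.symm
  apply exists_of_perp (K := K) hs hn (hl n hn)
  intro c0 hc0 hc0'
  obtain ⟨y, h, hy, hh, hny, hhn⟩ := exists_h (K := K) hs hn hnil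
  obtain ⟨c, hc, hc', rfl⟩ := surj_l (K := K) hn hnil hy hh hny hhn c0 hc0 hc0'
  have e0 : killingForm K G n c = 0 := B_nil hnil (by rw [hc', lie_zero])
  have e1 := hD.form n c e0
  have e2 : ⁅n, D c⁆ = -⁅D n, c⁆ := by
    have := hD.lie n c
    rw [hc', hD.zero] at this
    exact (neg_eq_of_add_eq_zero_right this.symm).symm
  have e3 : (2 : K) * killingForm K G n (D c) = killingForm K G (D n) ⁅h, c⁆ := by
    have : (2 : K) * killingForm K G n (D c) = killingForm K G ⁅h, n⁆ (D c) := by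
      rw [hhn]; simp
    rw [this, B_inv, e2, map_neg, ← B_inv, ← B_inv, ← lie_skew (D n) h, map_neg,
      LinearMap.neg_apply]
  rw [map_add, map_smul, smul_eq_mul]
  linear_combination 2 * e1 - e3

lemma claim1 (x : G) : ∃ s n : G, x = s + n ∧ (ad K G s).IsSemisimple ∧
    _root_.IsNilpotent (ad K G n) ∧ ⁅s, n⁆ = 0 ∧ (∀ c : G, ⁅x, c⁆ = 0 → ⁅s, c⁆ = 0) ∧
    ∀ D : G → G, IsDer K D → ∃ c w : G, ⁅s, c⁆ = 0 ∧ (∀ d : G, ⁅s, d⁆ = 0 → ⁅c, d⁆ = 0) ∧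
      D x = c + ⁅x, w⁆ := by
  obtain ⟨s, n, hx, hs, hnil, hn, hc⟩ := jordan (K := K) x
  refine ⟨s, n, hx, hs, hnil, hn, hc, ?_⟩
  intro D hD
  obtain ⟨a, b, ha, hab⟩ := exists_ker_add_range hs (D s)
  rw [ad_apply] at ha hab
  have hs2 : D s + ⁅b, s⁆ = a := by rw [hab, ← lie_skew b]; abel
  obtain ⟨hz, w, hw, hDn⟩ := claim1_aux hs hn hnil (hD.add_ad b) (by simpa only [hs2] using ha)
  simp only [hs2] at hz hDn
  refine ⟨a, w + b, ha, hz, ?_⟩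
  rw [hx, hD.add, hab, eq_sub_of_add_eq hDn]
  simp only [lie_add, add_lie, hw, ← lie_skew b n]
  abel

end Jordan
end IrrCodim

set_option linter.unusedSectionVars false
set_option linter.unusedVariables false
namespace IrrCodim
section Minor
open Module
variable {F : Type*} [Field F]

lemma exists_rows {m n : Type*} [Fintype m] [Fintype n] (A : Matrix m n F) (r : ℕ)
    (h : r ≤ A.rank) : ∃ e : Fin r → m, (A.submatrix e id).rank = r := by
  rw [A.rank_eq_finrank_span_row] at h
  obtain ⟨f, hf, -, hli⟩ := Submodule.exists_fun_fin_finrank_span_eq F (Set.range A.row)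
  choose e he using hf
  refine ⟨fun i => e (Fin.castLE h i), ?_⟩
  have : LinearIndependent F (A.submatrix (fun i => e (Fin.castLE h i)) id).row := by
    have h2 := hli.comp (Fin.castLE h) (Fin.castLE_injective h)
    have h3 : (A.submatrix (fun i => e (Fin.castLE h i)) id).row = f ∘ Fin.castLE h := by
      ext i j
      exact congrFun (he (Fin.castLE h i)) j
    rw [h3]
    exact h2
  rw [this.rank_matrix, Fintype.card_fin]

lemma exists_minor {m n : Type*} [Fintype m] [Fintype n] (A : Matrix m n F) (r : ℕ)
    (h : r ≤ A.rank) : ∃ (e : Fin r → m) (f : Fin r → n), (A.submatrix e f).det ≠ 0 := by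
  obtain ⟨e, he⟩ := exists_rows A r h
  obtain ⟨f, hf⟩ := exists_rows (A.submatrix e id).transpose r (by rw [Matrix.rank_transpose, he])
  refine ⟨e, f, ?_⟩
  have h3 : ((A.submatrix e f).transpose).rank = r := hf
  rw [Matrix.rank_transpose] at h3
  intro h0
  have h4 : LinearMap.range (A.submatrix e f).mulVecLin = ⊤ := by
    apply Submodule.eq_top_of_finrank_eq
    change (A.submatrix e f).rank = _
    rw [h3]; simp
  obtain ⟨v, hv, hv2⟩ := Matrix.exists_mulVec_eq_zero_iff.mpr h0
  have h5 := LinearMap.injective_iff_surjective.mpr (LinearMap.range_eq_top.mp h4)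
  exact hv (h5 (by simpa using hv2))

lemma le_rank_of_minor {m n : Type*} [Fintype m] [Fintype n] (A : Matrix m n F) (r : ℕ)
    (e : Fin r → m) (f : Fin r → n) (h : (A.submatrix e f).det ≠ 0) : r ≤ A.rank := by
  have h1 : (A.submatrix e f).rank = r := by
    rw [Matrix.rank_of_det_ne_zero h, Fintype.card_fin]
  have h2 := A.rank_submatrix_le e f
  omega

end Minor

section Rank
open LieAlgebra LieModule Module Polynomial
variable {K G : Type*} [Field K] [IsAlgClosed K] [CharZero K] [LieRing G] [LieAlgebra K G]
  [FiniteDimensional K G] [IsKilling K G]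

/-- independent functionals vanishing on `[x, G]`. -/
lemma le_ker_of_det {d : ℕ} (x : G) (P : Fin d → K[X]) (v : Fin d → G)
    (h : (Matrix.of fun i j => LinearMap.trace K G (aeval (ad K G x) (P i) * ad K G (v j))).det ≠ 0) :
    d ≤ finrank K (LinearMap.ker (ad K G x)) := by
  -- the linear map `G → K^d`
  let φ : G →ₗ[K] (Fin d → K) := LinearMap.pi fun i =>
    LinearMap.trace K G ∘ₗ LinearMap.mulLeft K (aeval (ad K G x) (P i)) ∘ₗ (ad K G : G →ₗ[K] Module.End K G)
  have hφ : ∀ u i, φ u i = LinearMap.trace K G (aeval (ad K G x) (P i) * ad K G u) := fun u i => rfl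
  have hsurj : LinearMap.range φ = ⊤ := by
    rw [LinearMap.range_eq_top]
    intro w
    have hu : IsUnit (Matrix.of fun i j =>
      LinearMap.trace K G (aeval (ad K G x) (P i) * ad K G (v j))) := by
      rw [Matrix.isUnit_iff_isUnit_det]; exact h.isUnit
    obtain ⟨c, hc⟩ := (Matrix.mulVec_surjective_iff_isUnit.mpr hu) w
    refine ⟨∑ j, c j • v j, ?_⟩
    ext i
    rw [← hc, map_sum, Finset.sum_apply]
    simp only [Matrix.mulVec, dotProduct, Matrix.of_apply, hφ]
    refine Finset.sum_congr rfl fun j _ => ?_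
    rw [map_smul (ad K G), mul_smul_comm, map_smul, smul_eq_mul, mul_comm]
  have hker : LinearMap.range (ad K G x) ≤ LinearMap.ker φ := by
    rintro _ ⟨w, rfl⟩
    ext i
    rw [hφ, ad_apply]
    have h1 : ad K G ⁅x, w⁆ = ad K G x * ad K G w - ad K G w * ad K G x := by ext; simp
    have h2 : Commute (ad K G x) (aeval (ad K G x) (P i)) := by
      have := (Polynomial.commute_X (P i)).map (aeval (ad K G x)).toRingHom
      simpa using this
    rw [h1, mul_sub, map_sub, ← mul_assoc, ← mul_assoc, LinearMap.trace_mul_comm K _ (ad K G x),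
      ← mul_assoc, h2.eq]
    simp
  have e1 := LinearMap.finrank_range_add_finrank_ker φ
  have e2 := LinearMap.finrank_range_add_finrank_ker (ad K G x)
  have e3 := Submodule.finrank_mono hker
  rw [hsurj] at e1
  simp only [finrank_top, finrank_fintype_fun_eq_card, Fintype.card_fin] at e1
  omega

lemma exists_poly (H : LieSubalgebra K G) [H.IsCartanSubalgebra] :
    ∃ h : H, ∀ v : H, ∃ P : K[X], aeval (ad K G h.1) P = ad K G v.1 := by
  let ι := {p : Weight K H G × Weight K H G // p.1 ≠ p.2}
  let f : ι → Dual K H := fun p => Weight.toLinear K H G p.1.1 - Weight.toLinear K H G p.1.2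
  obtain ⟨h, -, hh⟩ := Module.Dual.exists_forall_mem_ne_zero_of_forall_exists (⊤ : Submodule K H) f (by
    rintro ⟨⟨a, b⟩, hab⟩
    by_contra! hcon
    apply hab
    ext u
    have := hcon u trivial
    simpa [f, sub_eq_zero] using this)
  refine ⟨h, fun v => ?_⟩
  have hinj : Set.InjOn (fun a : Weight K H G => a h) (Finset.univ : Finset (Weight K H G)) := by
    intro a _ b _ hab
    by_contra hne
    apply hh ⟨(a, b), hne⟩
    simpa [f, sub_eq_zero] using hab
  classical
  refine ⟨Lagrange.interpolate Finset.univ (fun a : Weight K H G => a h) (fun a => a v), ?_⟩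
  ext w
  have hw : w ∈ ⨆ a : Weight K H G, genWeightSpace G a := by
    rw [LieModule.iSup_genWeightSpace_eq_top']; trivial
  induction hw using LieSubmodule.iSup_induction' with
  | mem a w hw =>
    have e1 := IsKilling.lie_eq_smul_of_mem_rootSpace hw h
    have e2 := IsKilling.lie_eq_smul_of_mem_rootSpace hw v
    have e1' : ad K G h.1 w = a h • w := e1
    have e2' : ad K G v.1 w = a v • w := e2
    rw [e2']
    have := Module.End.aeval_apply_of_hasEigenvector (f := ad K G h.1) (μ := a h) (x := w)
      (p := Lagrange.interpolate Finset.univ (fun a : Weight K H G => a h) (fun a => a v))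
    by_cases hw0 : w = 0
    · simp [hw0]
    rw [this ⟨by simpa using e1', hw0⟩, Lagrange.eval_interpolate_at_node _ hinj (Finset.mem_univ a)]
  | zero => simp
  | add _ _ _ _ h1 h2 => rw [map_add, map_add, h1, h2]

lemma finrank_cartan_le (H : LieSubalgebra K G) [H.IsCartanSubalgebra] (a : G) :
    finrank K H ≤ finrank K (LinearMap.ker (ad K G a)) := by
  obtain ⟨h, hh⟩ := exists_poly (K := K) H
  set d := finrank K H
  let v : Basis (Fin d) K H := Module.finBasis K H
  choose P hP using fun i => hh (v i)
  let b := Module.finBasis K G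
  let n := Fin (finrank K G)
  let T : Module.End K G ≃ₐ[K] Matrix n n K := LinearMap.toMatrixAlgEquiv b
  let A : Matrix n n K[X] := (T (ad K G a)).map C + (X : K[X]) • ((T (ad K G h.1)) - T (ad K G a)).map C
  let ev : K → (Matrix n n K[X] →ₐ[K] Matrix n n K) := fun τ => (Polynomial.aeval τ).mapMatrix
  have hA : ∀ τ, ev τ A = T (ad K G (a + τ • (h.1 - a))) := by
    intro τ
    ext i j
    simp [ev, A]
  let M : Matrix (Fin d) (Fin d) K[X] := Matrix.of fun i j =>
    Matrix.trace (aeval A (P i) * (T (ad K G (v j).1)).map C)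
  have hM : ∀ τ, (Polynomial.aeval (R := K) τ) M.det = (Matrix.of fun i j => LinearMap.trace K G
      (aeval (ad K G (a + τ • (h.1 - a))) (P i) * ad K G (v j).1)).det := by
    intro τ
    rw [AlgHom.map_det]
    congr 1
    ext i j
    have e1 : (Polynomial.aeval (R := K) τ).mapMatrix M i j = Matrix.trace
        (ev τ (aeval A (P i) * (T (ad K G (v j).1)).map C)) := by
      simp only [AlgHom.mapMatrix_apply, Matrix.map_apply, M, Matrix.of_apply, ev, Matrix.trace,
        map_sum, Matrix.diag]
    rw [e1, map_mul, ← Polynomial.aeval_algHom_apply, hA]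
    have e2 : ev τ ((T (ad K G (v j).1)).map C) = T (ad K G (v j).1) := by
      ext; simp [ev]
    rw [e2, Polynomial.aeval_algHom_apply, ← map_mul, Matrix.of_apply,
      LinearMap.trace_eq_matrix_trace K b]
    rfl
  have hM0 : M.det ≠ 0 := by
    intro h0
    have := hM 1
    rw [h0, map_zero] at this
    have e : ∀ i j, LinearMap.trace K G (aeval (ad K G (a + (1 : K) • (h.1 - a))) (P i) *
        ad K G (v j).1) = LinearMap.BilinForm.toMatrix v (traceForm K H G) i j := by
      intro i j
      have : a + (1 : K) • (h.1 - a) = h.1 := by simp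
      rw [this, hP, LinearMap.BilinForm.toMatrix_apply, traceForm_apply_apply]
      rfl
    simp only [e] at this
    have nd := IsKilling.traceForm_cartan_nondegenerate K G H
    rw [LinearMap.BilinForm.nondegenerate_iff_det_ne_zero v] at nd
    exact nd this.symm
  obtain ⟨e, f, hef⟩ := exists_minor (T (ad K G a)) _ le_rfl
  have hN : ∀ τ, (Polynomial.aeval (R := K) τ) (A.submatrix e f).det =
      ((T (ad K G (a + τ • (h.1 - a)))).submatrix e f).det := by
    intro τ
    rw [AlgHom.map_det, ← hA]
    rfl
  have hN0 : (A.submatrix e f).det ≠ 0 := by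
    intro h0
    have := hN 0
    rw [h0, map_zero] at this
    apply hef
    simpa using this.symm
  obtain ⟨τ, hτ⟩ : ∃ τ, (M.det * (A.submatrix e f).det).eval τ ≠ 0 := by
    by_contra! hcon
    exact mul_ne_zero hM0 hN0 (Polynomial.funext (by simpa using hcon))
  rw [Polynomial.eval_mul, ← Polynomial.coe_aeval_eq_eval, hM, hN] at hτ
  have h1 := le_ker_of_det _ P (fun j => (v j).1) (left_ne_zero_of_mul hτ)
  have h2 := le_rank_of_minor _ _ _ _ (right_ne_zero_of_mul hτ)
  have hr : ∀ x : G, (T (ad K G x)).rank = finrank K (LinearMap.range (ad K G x)) := by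
    intro x
    rw [Matrix.rank_eq_finrank_range_toLin _ b b]
    have : Matrix.toLin b b (T (ad K G x)) = ad K G x := Matrix.toLin_toMatrix b b _
    rw [this]
  rw [hr, hr] at h2
  have e1 := LinearMap.finrank_range_add_finrank_ker (ad K G a)
  have e2 := LinearMap.finrank_range_add_finrank_ker (ad K G (a + τ • (h.1 - a)))
  omega

end Rank
end IrrCodim

set_option linter.unusedSectionVars false
set_option linter.unusedVariables false
namespace IrrCodim
section Struct
open LieAlgebra LieModule Module
variable {K G : Type*} [Field K] [IsAlgClosed K] [CharZero K] [LieRing G] [LieAlgebra K G]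
  [FiniteDimensional K G] [IsKilling K G]

/-- the centralizer of `s` as a Lie subalgebra. -/
def lS (K : Type*) {G : Type*} [Field K] [LieRing G] [LieAlgebra K G] (s : G) : LieSubalgebra K G where
  __ := LinearMap.ker (ad K G s)
  lie_mem' := fun ha hb => lie_cent ha hb

/-- the center of the centralizer of `s`. -/
def zS (K : Type*) {G : Type*} [Field K] [LieRing G] [LieAlgebra K G] (s : G) : Submodule K G where
  carrier := {c | ⁅s, c⁆ = 0 ∧ ∀ d : G, ⁅s, d⁆ = 0 → ⁅c, d⁆ = 0}
  add_mem' := by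
    rintro a b ⟨ha, ha'⟩ ⟨hb, hb'⟩
    exact ⟨by rw [lie_add, ha, hb, add_zero],
      fun d hd => by rw [add_lie, ha' d hd, hb' d hd, add_zero]⟩
  zero_mem' := ⟨by simp, by simp⟩
  smul_mem' := by
    rintro c a ⟨ha, ha'⟩
    exact ⟨by rw [lie_smul, ha, smul_zero], fun d hd => by rw [smul_lie, ha' d hd, smul_zero]⟩

lemma exists_cartan {s : G} (hs : (ad K G s).IsSemisimple) :
    ∃ H : LieSubalgebra K G, H.IsCartanSubalgebra ∧ zS K s ≤ H.toSubmodule ∧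
      H.toSubmodule ≤ LinearMap.ker (ad K G s) := by
  obtain ⟨x, hx⟩ := LieAlgebra.exists_isCartanSubalgebra_engel K (lS K s)
  set H0 := LieSubalgebra.engel K x
  let H : LieSubalgebra K G := H0.map (lS K s).incl
  have hmem : ∀ c, c ∈ H ↔ ∃ hc : c ∈ lS K s, (⟨c, hc⟩ : lS K s) ∈ H0 := by
    intro c
    rw [LieSubalgebra.mem_map]
    constructor
    · rintro ⟨y, hy, rfl⟩
      exact ⟨y.2, hy⟩
    · rintro ⟨hc, h⟩
      exact ⟨_, h, rfl⟩
  have hz : zS K s ≤ H.toSubmodule := by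
    intro c hc
    apply (hmem c).mpr
    refine ⟨hc.1, ?_⟩
    have := hx.self_normalizing
    rw [← this, LieSubalgebra.mem_normalizer_iff]
    intro y hy
    have : ⁅(⟨c, hc.1⟩ : lS K s), y⁆ = 0 := by
      ext; exact hc.2 y.1 y.2
    rw [this]; exact zero_mem _
  have hss : s ∈ H := hz ⟨lie_self s, fun d hd => hd⟩
  have hl : H.toSubmodule ≤ LinearMap.ker (ad K G s) := by
    intro c hc
    obtain ⟨h, -⟩ := (hmem c).mp hc
    exact h
  refine ⟨H, ⟨?_, ?_⟩, hz, hl⟩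
  · have hn : LieRing.IsNilpotent H0 := hx.nilpotent
    exact (LieEquiv.nilpotent_iff_equiv_nilpotent (LieSubalgebra.equivMapOfInjective (lS K s).incl H0 Subtype.val_injective)).mp hn
  · apply le_antisymm _ (LieSubalgebra.le_normalizer H)
    intro v hv
    rw [LieSubalgebra.mem_normalizer_iff] at hv
    have h1 : ⁅s, ⁅v, s⁆⁆ = 0 := hl (hv s hss)
    have h2 : ⁅s, v⁆ = 0 := by
      apply ker_sq_of_semisimple hs
      rw [← lie_skew v s, lie_neg, neg_eq_zero] at h1
      exact h1
    apply (hmem v).mpr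
    refine ⟨h2, ?_⟩
    have := hx.self_normalizing
    rw [← this, LieSubalgebra.mem_normalizer_iff]
    intro y hy
    obtain ⟨_, h⟩ := (hmem _).mp (hv y.1 ((hmem _).mpr ⟨y.2, hy⟩))
    exact h

lemma ker_le_of_z_eq {s : G} (H : LieSubalgebra K G) [H.IsCartanSubalgebra]
    (hz : zS K s = H.toSubmodule) : LinearMap.ker (ad K G s) ≤ H.toSubmodule := by
  intro v hv
  have := LieSubalgebra.IsCartanSubalgebra.self_normalizing (H := H)
  change v ∈ H
  rw [← this, LieSubalgebra.mem_normalizer_iff]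
  intro y hy
  have hy : y ∈ zS K s := hz ▸ hy
  rw [← lie_skew, hy.2 v hv]
  simp

lemma prop_of_vanish {V : Type*} [AddCommGroup V] [Module K V] [FiniteDimensional K V]
    (z : Submodule K V) (h : finrank K V ≤ finrank K z + 1) (f f' : V →ₗ[K] K)
    (hf : ∀ c ∈ z, f c = 0) (hf' : ∀ c ∈ z, f' c = 0) (h0 : f ≠ 0) : ∃ a : K, f' = a • f := by
  obtain ⟨v, hv⟩ : ∃ v, f v ≠ 0 := by
    by_contra! hc
    exact h0 (LinearMap.ext hc)
  refine ⟨f' v * (f v)⁻¹, ?_⟩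
  have hlt : z < LinearMap.ker (f' - (f' v * (f v)⁻¹) • f) := by
    refine lt_of_le_of_ne (fun c hc => by simp [hf c hc, hf' c hc]) ?_
    intro he
    have : v ∈ LinearMap.ker (f' - (f' v * (f v)⁻¹) • f) := by simp [hv]
    rw [← he] at this
    exact hv (hf v this)
  have h1 := Submodule.finrank_lt_finrank_of_lt hlt
  have h2 := Submodule.eq_top_of_finrank_eq (le_antisymm (Submodule.finrank_le _)
    (h.trans h1) : finrank K (LinearMap.ker (f' - (f' v * (f v)⁻¹) • f)) = finrank K V)
  have := LinearMap.ker_eq_top.mp h2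
  exact sub_eq_zero.mp this

lemma struct {s : G} (hs : (ad K G s).IsSemisimple) (H : LieSubalgebra K G) [H.IsCartanSubalgebra]
    (hz : zS K s ≤ H.toSubmodule) :
    finrank K (zS K s) + 2 ≤ finrank K H ∨
      finrank K (LinearMap.ker (ad K G s)) ≤ finrank K H + 2 := by
  by_contra! hcon
  obtain ⟨h1, h2⟩ := hcon
  have hsH : s ∈ H := hz ⟨lie_self s, fun d hd => hd⟩
  let s' : H := ⟨s, hsH⟩
  have hroot : ∀ β : Weight K H G, β s' = 0 → ∀ c : H, c.1 ∈ zS K s → β c = 0 := by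
    intro β hβ c hc
    obtain ⟨w, hw, hw0⟩ := β.exists_ne_zero
    have e1 := IsKilling.lie_eq_smul_of_mem_rootSpace hw s'
    have e2 := IsKilling.lie_eq_smul_of_mem_rootSpace hw c
    rw [hβ, zero_smul] at e1
    have e3 : ⁅c, w⁆ = 0 := hc.2 w e1
    rw [e3] at e2
    exact (smul_eq_zero.mp e2.symm).resolve_right hw0
  -- v in l lies in the sum of the root spaces vanishing at s
  have hl : LinearMap.ker (ad K G s) ≤
      ⨆ β : {β : Weight K H G // β s' = 0}, (genWeightSpace G β.1).toSubmodule := by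
    intro v hv
    have hv' : v ∈ (⨆ β : Weight K H G, genWeightSpace G β) := by
      rw [LieModule.iSup_genWeightSpace_eq_top']; trivial
    have key : ∃ w ∈ ⨆ β : {β : Weight K H G // β s' = 0}, (genWeightSpace G β.1).toSubmodule,
        ∃ u, v = w + ⁅s, u⁆ := by
      clear hv
      induction hv' using LieSubmodule.iSup_induction' with
      | mem β v hv =>
        by_cases hβ : β s' = 0
        · exact ⟨v, Submodule.mem_iSup_of_mem (⟨β, hβ⟩ : {β : Weight K H G // β s' = 0}) hv,
            0, by simp⟩
        · refine ⟨0, zero_mem _, (β s')⁻¹ • v, ?_⟩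
          have e1 : ⁅s, v⁆ = β s' • v := IsKilling.lie_eq_smul_of_mem_rootSpace hv s'
          rw [lie_smul, e1, smul_smul, inv_mul_cancel₀ hβ]; simp
      | zero => exact ⟨0, zero_mem _, 0, by simp⟩
      | add v1 v2 _ _ i1 i2 =>
        obtain ⟨w1, hw1, u1, rfl⟩ := i1
        obtain ⟨w2, hw2, u2, rfl⟩ := i2
        exact ⟨w1 + w2, add_mem hw1 hw2, u1 + u2, by rw [lie_add]; abel⟩
    obtain ⟨w, hw, u, rfl⟩ := key
    have hws : ⁅s, w⁆ = 0 := by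
      have hle : (⨆ β : {β : Weight K H G // β s' = 0}, (genWeightSpace G β.1).toSubmodule) ≤
          LinearMap.ker (ad K G s) := by
        apply iSup_le
        rintro ⟨β, hβ⟩ c hc
        have e1 : ⁅s, c⁆ = β s' • c := IsKilling.lie_eq_smul_of_mem_rootSpace hc s'
        change ⁅s, c⁆ = 0
        rw [e1, hβ, zero_smul]
      exact hle hw
    have : ⁅s, u⁆ = 0 := by
      apply ker_sq_of_semisimple hs
      have h3 : ⁅s, w + ⁅s, u⁆⁆ = 0 := hv
      rw [lie_add, hws, zero_add] at h3
      exact h3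
    rw [this, add_zero]
    exact hw
  -- annihilator of z in H^* is at most one-dimensional
  let z' : Submodule K H := (zS K s).comap H.toSubmodule.subtype
  have hz' : finrank K z' = finrank K (zS K s) := by
    have : z'.map H.toSubmodule.subtype = zS K s := by
      rw [Submodule.map_comap_eq, Submodule.range_subtype, inf_eq_right.mpr hz]
    rw [← this]
    exact (LinearEquiv.finrank_eq (Submodule.equivMapOfInjective _ (Submodule.injective_subtype _) z'))
  by_cases hex : ∃ α : Weight K H G, α s' = 0 ∧ α.IsNonZero
  · obtain ⟨α, hα, hα0⟩ := hex
    have hle : (⨆ β : {β : Weight K H G // β s' = 0}, (genWeightSpace G β.1).toSubmodule) ≤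
        H.toSubmodule ⊔ (rootSpace H α).toSubmodule ⊔ (rootSpace H (-α)).toSubmodule := by
      apply iSup_le
      rintro ⟨β, hβ⟩
      by_cases hβ0 : β.IsZero
      · have : (genWeightSpace G β : LieSubmodule K H G) = H.toLieSubmodule := by
          rw [hβ0.eq]; exact rootSpace_zero_eq K G H
        rw [this]
        exact le_sup_of_le_left le_sup_left
      · obtain ⟨a, ha⟩ := prop_of_vanish z' (by omega) (Weight.toLinear K H G α)
          (Weight.toLinear K H G β) (fun c hc => hroot α hα c hc) (fun c hc => hroot β hβ c hc)
          (fun h0 => hα0 (by simpa using h0))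
        have hprop : (β : H → K) = a • (α : H → K) := by
          funext u
          exact congrArg (fun f => f u) ha
        rcases IsKilling.eq_neg_or_eq_of_eq_smul α β hβ0 _ hprop with rfl | rfl
        · exact le_sup_right
        · exact le_sup_of_le_left le_sup_right
    have f1 := Submodule.finrank_mono (hl.trans hle)
    have f2 := Submodule.finrank_add_le_finrank_add_finrank
      (H.toSubmodule ⊔ (rootSpace H α).toSubmodule) (rootSpace H (-α)).toSubmodule
    have f3 := Submodule.finrank_add_le_finrank_add_finrank
      (H.toSubmodule) (rootSpace H α).toSubmodule
    have f4 : finrank K (rootSpace H α).toSubmodule = 1 := IsKilling.finrank_rootSpace_eq_one α hα0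
    have f5 : finrank K (rootSpace H (-α)).toSubmodule = 1 :=
      IsKilling.finrank_rootSpace_eq_one (-α) (by simpa using hα0)
    have f6 : finrank K H.toSubmodule = finrank K H := rfl
    omega
  · push Not at hex
    have hle : (⨆ β : {β : Weight K H G // β s' = 0}, (genWeightSpace G β.1).toSubmodule) ≤
        H.toSubmodule := by
      apply iSup_le
      rintro ⟨β, hβ⟩
      have hβ0 : β.IsZero := hex β hβ
      have : (genWeightSpace G β : LieSubmodule K H G) = H.toLieSubmodule := by
        rw [hβ0.eq]; exact rootSpace_zero_eq K G H
      rw [this]; rfl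
    have f1 := Submodule.finrank_mono (hl.trans hle)
    have f6 : finrank K H.toSubmodule = finrank K H := rfl
    omega

end Struct
end IrrCodim

set_option linter.unusedSectionVars false
set_option linter.unusedVariables false
namespace IrrCodim
section ThmB
open LieAlgebra LieModule Module
variable {K G : Type*} [Field K] [IsAlgClosed K] [CharZero K] [LieRing G] [LieAlgebra K G]
  [FiniteDimensional K G] [IsKilling K G]

lemma finrank_prod_le (T : Submodule K (G × G)) (W1 W2 : Submodule K G)
    (h1 : ∀ p ∈ T, p.1 ∈ W1) (h2 : ∀ v : G, ((0 : G), v) ∈ T → v ∈ W2) :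
    finrank K T ≤ finrank K W1 + finrank K W2 := by
  let f : T →ₗ[K] G := (LinearMap.fst K G G).comp T.subtype
  have e := LinearMap.finrank_range_add_finrank_ker f
  have hr : finrank K (LinearMap.range f) ≤ finrank K W1 := by
    apply Submodule.finrank_mono
    rintro _ ⟨p, rfl⟩
    exact h1 p.1 p.2
  let i : LinearMap.ker f →ₗ[K] W2 := LinearMap.codRestrict W2
    (((LinearMap.snd K G G).comp T.subtype).comp (LinearMap.ker f).subtype) (by
      rintro ⟨⟨⟨a, b⟩, hp⟩, hk⟩
      have : a = 0 := hk
      subst this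
      exact h2 b hp)
  have hi : Function.Injective i := by
    rintro ⟨⟨⟨a, b⟩, hp⟩, hk⟩ ⟨⟨⟨a', b'⟩, hp'⟩, hk'⟩ h0
    have ha : a = 0 := hk
    have ha' : a' = 0 := hk'
    have hb : b = b' := congrArg Subtype.val h0
    subst ha; subst hb; subst ha'
    rfl
  have := LinearMap.finrank_le_finrank_of_injective hi
  omega

lemma finrank_cent_add_two {s v : G} (hs : (ad K G s).IsSemisimple) (hv : ⁅s, v⁆ = 0)
    (hvz : v ∉ zS K s) :
    finrank K ↥(LinearMap.ker (ad K G s) ⊓ LinearMap.ker (ad K G v)) + 2 ≤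
      finrank K (LinearMap.ker (ad K G s)) := by
  obtain ⟨a, ha, hva⟩ : ∃ a : G, ⁅s, a⁆ = 0 ∧ ⁅v, a⁆ ≠ 0 := by
    by_contra! hc
    exact hvz ⟨hv, hc⟩
  obtain ⟨b, hb, hvb⟩ : ∃ b : G, ⁅s, b⁆ = 0 ∧ killingForm K G ⁅v, a⁆ b ≠ 0 := by
    by_contra! hc
    exact hva (nondeg_cent hs (lie_cent hv ha) hc)
  let f : LinearMap.ker (ad K G s) →ₗ[K] G := (ad K G v).comp (LinearMap.ker (ad K G s)).subtype
  have e := LinearMap.finrank_range_add_finrank_ker f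
  have hker : finrank K (LinearMap.ker f) =
      finrank K ↥(LinearMap.ker (ad K G s) ⊓ LinearMap.ker (ad K G v)) := by
    have : (LinearMap.ker f).map (LinearMap.ker (ad K G s)).subtype =
        LinearMap.ker (ad K G s) ⊓ LinearMap.ker (ad K G v) := by
      rw [LinearMap.ker_comp, Submodule.map_comap_eq, Submodule.range_subtype]
    rw [← this]
    exact LinearEquiv.finrank_eq
      (Submodule.equivMapOfInjective _ (Submodule.injective_subtype _) _)
  have hli : LinearIndependent K ![(⟨⁅v, a⁆, ⟨⟨a, ha⟩, rfl⟩⟩ : LinearMap.range f),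
      ⟨⁅v, b⁆, ⟨⟨b, hb⟩, rfl⟩⟩] := by
    rw [LinearIndependent.pair_iff]
    intro p q hpq
    have hpq' : p • ⁅v, a⁆ + q • ⁅v, b⁆ = 0 := congrArg Subtype.val hpq
    have haa : ∀ c : G, killingForm K G ⁅v, c⁆ c = 0 := by
      intro c
      have := LieModule.traceForm_apply_lie_apply K G G v c c
      rw [lie_self, map_zero] at this
      exact this
    have hab : killingForm K G ⁅v, b⁆ a = - killingForm K G ⁅v, a⁆ b := by
      have := haa (a + b)
      rw [lie_add, map_add, map_add, LinearMap.add_apply, LinearMap.add_apply, haa a, haa b] at this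
      linear_combination this
    have h1 := congrArg (fun w => killingForm K G w b) hpq'
    have h2 := congrArg (fun w => killingForm K G w a) hpq'
    simp only [map_add, map_smul, LinearMap.add_apply, LinearMap.smul_apply, haa, hab, map_zero,
      LinearMap.zero_apply, smul_eq_mul, mul_zero, add_zero, zero_add, mul_neg, neg_eq_zero] at h1 h2
    exact ⟨(mul_eq_zero.mp h1).resolve_right hvb, (mul_eq_zero.mp h2).resolve_right hvb⟩
  have := hli.fintype_card_le_finrank
  simp at this
  omega

theorem thmB (x y a : G) (r : ℕ) (T : Submodule K (G × G))
    (hT : ∀ p ∈ T, ∃ D : G → G, IsDer K D ∧ p = (D x, D y))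
    (hxy : ⁅x, y⁆ = 0) (ha : finrank K (LinearMap.ker (ad K G a)) ≤ r)
    (hr : r < finrank K ↥(LinearMap.ker (ad K G x) ⊓ LinearMap.ker (ad K G y))) :
    finrank K T + 2 ≤ finrank K G + r := by
  obtain ⟨s, n, hxsn, hs, hn, hsn, hcent, hD⟩ := claim1 (K := K) x
  obtain ⟨H, hH, hzH, hHl⟩ := exists_cartan hs
  have hHr : finrank K H ≤ r := (finrank_cartan_le H a).trans ha
  have hzH' : finrank K (zS K s) ≤ finrank K H := Submodule.finrank_mono hzH
  have hDlie : ∀ D : G → G, IsDer K D → ∀ u v : G, D ⁅u, v⁆ = ⁅D u, v⁆ + ⁅u, D v⁆ :=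
    fun D h => h.lie
  have hD0 : ∀ D : G → G, IsDer K D → D 0 = 0 := fun D h => by
    have := h.add 0 0
    simpa using this
  have hW1 : ∀ p ∈ T, p.1 ∈ zS K s ⊔ LinearMap.range (ad K G x) := by
    intro p hp
    obtain ⟨D, hDD, rfl⟩ := hT p hp
    obtain ⟨c, w, h1, h2, h3⟩ := hD D hDD
    change D x ∈ _
    rw [h3]
    exact Submodule.add_mem_sup ⟨h1, h2⟩ ⟨w, rfl⟩
  have hW2 : ∀ v : G, ((0 : G), v) ∈ T → v ∈ LinearMap.ker (ad K G x) := by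
    intro v hv
    obtain ⟨D, hDD, h⟩ := hT _ hv
    obtain ⟨h1, rfl⟩ := Prod.ext_iff.mp h
    have h1 : 0 = D x := h1
    have := hDlie D hDD x y
    rw [hxy, ← h1, zero_lie, zero_add, hD0 D hDD] at this
    exact this.symm
  have hrk := LinearMap.finrank_range_add_finrank_ker (ad K G x)
  have hsup := Submodule.finrank_add_le_finrank_add_finrank (zS K s) (LinearMap.range (ad K G x))
  have hdim := finrank_prod_le T _ _ hW1 hW2
  rcases struct hs H hzH with h | h
  · omega
  have hxl : ⁅s, x⁆ = 0 := hcent x (lie_self x)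
  have hle : LinearMap.ker (ad K G x) ≤ LinearMap.ker (ad K G s) := fun c hc => hcent c hc
  have hxz : x ∈ zS K s := by
    by_contra hx
    have h1 := finrank_cent_add_two hs hxl hx
    rw [inf_eq_right.mpr hle] at h1
    have h2 : finrank K ↥(LinearMap.ker (ad K G x) ⊓ LinearMap.ker (ad K G y)) ≤
      finrank K (LinearMap.ker (ad K G x)) := Submodule.finrank_mono inf_le_left
    omega
  have hxs : LinearMap.ker (ad K G x) = LinearMap.ker (ad K G s) :=
    le_antisymm hle (fun d hd => hxz.2 d hd)
  have hyl : ⁅s, y⁆ = 0 := hcent y hxy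
  have hyz : y ∈ zS K s := by
    by_contra hy
    have h1 := finrank_cent_add_two hs hyl hy
    rw [hxs] at hr
    omega
  have hlr : r < finrank K (LinearMap.ker (ad K G s)) := by
    refine hr.trans_le (Submodule.finrank_mono ?_)
    rw [hxs]; exact inf_le_left
  have hzlt : finrank K (zS K s) < finrank K H := by
    refine lt_of_le_of_ne hzH' fun he => ?_
    have := Submodule.eq_of_le_of_finrank_eq hzH he
    have := Submodule.finrank_mono (ker_le_of_z_eq H this)
    change _ ≤ finrank K H at this
    omega
  have hW3 : ∀ v : G, ((0 : G), v) ∈ T → v ∈ zS K s := by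
    intro v hv
    have hv' := hW2 v hv
    obtain ⟨D, hDD, h⟩ := hT _ hv
    obtain ⟨h1, rfl⟩ := Prod.ext_iff.mp h
    have h1 : 0 = D x := h1
    refine ⟨hcent _ hv', fun d hd => ?_⟩
    have hxd : ⁅x, d⁆ = 0 := hxz.2 d hd
    have hxDd : ⁅x, D d⁆ = 0 := by
      have := hDlie D hDD x d
      rw [hxd, ← h1, zero_lie, zero_add, hD0 D hDD] at this
      exact this.symm
    have hyDd : ⁅y, D d⁆ = 0 := hyz.2 _ (hcent _ hxDd)
    have := hDlie D hDD y d
    rw [hyz.2 d hd, hyDd, add_zero, hD0 D hDD] at this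
    exact this.symm
  have hdim2 := finrank_prod_le T _ _ hW1 hW3
  rw [hxs] at hrk
  omega

end ThmB
end IrrCodim

set_option linter.unusedSectionVars false
set_option linter.unusedVariables false
set_option linter.style.haveILetI false
set_option linter.unusedSimpArgs false
namespace IrrCodim
section DimTheory
open Module TensorProduct

lemma ext_der {F S L : Type*} [Field F] [CommRing S] [Field L] [Algebra F S] [Algebra S L]
    [Algebra F L] [IsScalarTower F S L] [Algebra.FormallyEtale S L] (d : Derivation F S L) :
    ∃ D : Derivation F L L, ∀ s, D (algebraMap S L s) = d s := by
  let e := KaehlerDifferential.tensorKaehlerEquivOfFormallyEtale F S L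
  let l : L ⊗[S] Ω[S⁄F] →ₗ[L] L := LinearMap.liftBaseChange L d.liftKaehlerDifferential
  refine ⟨(l.comp e.symm.toLinearMap).compDer (KaehlerDifferential.D F L), fun s => ?_⟩
  change l (e.symm (KaehlerDifferential.D F L (algebraMap S L s))) = d s
  rw [KaehlerDifferential.tensorKaehlerEquivOfFormallyEtale_symm_D_algebraMap]
  simp [l]

lemma ext_der_poly {F S L : Type*} [Field F] [CharZero F] [CommRing S] [IsDomain S] [Field L] [Algebra F S]
    [Algebra S L] [Algebra F L] [IsScalarTower F S L] [FaithfulSMul S L]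
    [Algebra.IsAlgebraic S L] (d : Derivation F S L) :
    ∃ D : Derivation F L L, ∀ s, D (algebraMap S L s) = d s := by
  letI := FractionRing.liftAlgebra S L
  haveI : Algebra.IsAlgebraic (FractionRing S) L := Algebra.IsAlgebraic.extendScalars (R := S) (IsFractionRing.injective S (FractionRing S))
  haveI : CharZero (FractionRing S) := by
    have : CharZero S := charZero_of_injective_algebraMap (algebraMap F S).injective
    exact charZero_of_injective_algebraMap (IsFractionRing.injective S (FractionRing S))
  haveI : Algebra.FormallyEtale (FractionRing S) L := Algebra.FormallyEtale.of_isSeparable _ _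
  haveI : Algebra.FormallyEtale S (FractionRing S) :=
    Algebra.FormallyEtale.of_isLocalization (nonZeroDivisors S)
  haveI : Algebra.FormallyEtale S L := Algebra.FormallyEtale.comp S (FractionRing S) L
  exact ext_der d

/-- Evaluation of derivations at a family of elements. -/
def evDer (F : Type*) {L ι : Type*} [Field F] [Field L] [Algebra F L] (ξ : ι → L) :
    Derivation F L L →ₗ[L] (ι → L) where
  toFun D := fun j => D (ξ j)
  map_add' _ _ := rfl
  map_smul' _ _ := rfl

lemma krull_le_of_integral {P A : Type*} [CommRing P] [CommRing A] [Algebra P A]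
    [Algebra.IsIntegral P A] : ringKrullDim A ≤ ringKrullDim P := by
  refine Order.krullDim_le_of_strictMono
    (fun p : PrimeSpectrum A => PrimeSpectrum.comap (algebraMap P A) p) ?_
  intro p q h
  haveI := p.2
  exact Ideal.IsIntegral.comap_lt_comap h

theorem dim_le_rank {F A L ι : Type*} [Field F] [CharZero F] [Finite ι] [CommRing A] [IsDomain A]
    [Algebra F A] [Field L] [Algebra A L] [Algebra F L] [IsScalarTower F A L] [FaithfulSMul A L]
    [Algebra.IsAlgebraic A L] (π : MvPolynomial ι F →ₐ[F] A) (hπ : Function.Surjective π) :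
    ringKrullDim A ≤
      (finrank L (LinearMap.range (evDer F (fun j => algebraMap A L (π (MvPolynomial.X j))))) : ℕ) := by
  haveI : Algebra.FiniteType F A := Algebra.FiniteType.of_surjective π hπ
  obtain ⟨s, φ, hinj, hinteg⟩ := exists_integral_inj_algHom_of_fg F A
  letI : Algebra (MvPolynomial (Fin s) F) A := φ.toRingHom.toAlgebra
  haveI : Algebra.IsIntegral (MvPolynomial (Fin s) F) A := ⟨hinteg⟩
  have h1 : ringKrullDim A ≤ s := by
    refine (krull_le_of_integral (P := MvPolynomial (Fin s) F) (A := A)).trans ?_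
    rw [MvPolynomial.ringKrullDim_of_isNoetherianRing, ringKrullDim_eq_zero_of_field]
    simp
  refine h1.trans ?_
  letI : Algebra (MvPolynomial (Fin s) F) L := ((algebraMap A L).comp φ.toRingHom).toAlgebra
  haveI : IsScalarTower (MvPolynomial (Fin s) F) A L := IsScalarTower.of_algebraMap_eq fun x => rfl
  haveI : IsScalarTower F (MvPolynomial (Fin s) F) L := IsScalarTower.of_algebraMap_eq fun x => by
    change _ = algebraMap A L (φ (algebraMap F _ x))
    rw [AlgHom.commutes, ← IsScalarTower.algebraMap_apply]
  haveI : FaithfulSMul (MvPolynomial (Fin s) F) L :=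
    (faithfulSMul_iff_algebraMap_injective _ _).mpr
      ((FaithfulSMul.algebraMap_injective A L).comp hinj)
  haveI : FaithfulSMul (MvPolynomial (Fin s) F) A :=
    (faithfulSMul_iff_algebraMap_injective _ _).mpr hinj
  haveI : Algebra.IsAlgebraic (MvPolynomial (Fin s) F) L :=
    Algebra.IsAlgebraic.trans (MvPolynomial (Fin s) F) A L
  set ξ : ι → L := fun j => algebraMap A L (π (MvPolynomial.X j)) with hξ
  have hev : ∀ p, MvPolynomial.aeval ξ p = algebraMap A L (π p) := by
    intro p
    have : MvPolynomial.aeval ξ = (IsScalarTower.toAlgHom F A L).comp π := by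
      apply MvPolynomial.algHom_ext
      intro i; simp [hξ]
    rw [this]; rfl
  choose P hP using fun i : Fin s => hπ (φ (MvPolynomial.X i))
  classical
  haveI := Fintype.ofFinite ι
  let J : (ι → L) →ₗ[L] (Fin s → L) :=
    LinearMap.pi fun i => ∑ j, (MvPolynomial.aeval ξ (MvPolynomial.pderiv j (P i))) • LinearMap.proj j
  have hder : ∀ (D : Derivation F L L) (p : MvPolynomial ι F),
      D (MvPolynomial.aeval ξ p) = ∑ j, MvPolynomial.aeval ξ (MvPolynomial.pderiv j p) * D (ξ j) := by
    intro D p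
    induction p using MvPolynomial.induction_on with
    | C a => simp
    | add p q hp hq => simp [hp, hq, add_mul, Finset.sum_add_distrib]
    | mul_X p i hp =>
      simp only [map_mul, MvPolynomial.aeval_X, Derivation.leibniz, hp, map_add, smul_eq_mul, add_mul,
        Finset.sum_add_distrib, MvPolynomial.pderiv_X, Finset.mul_sum]
      congr 1
      · rw [Finset.sum_eq_single i]
        · simp
        · intro b _ hb
          simp [Pi.single_apply, hb.symm]
        · simp
      · exact Finset.sum_congr rfl fun j _ => by ring
  have hsurj : Function.Surjective (J.domRestrict (LinearMap.range (evDer F ξ))) := by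
    intro v
    obtain ⟨D, hD⟩ := ext_der_poly (L := L) (MvPolynomial.mkDerivation F v : Derivation F (MvPolynomial (Fin s) F) L)
    refine ⟨⟨_, ⟨D, rfl⟩⟩, ?_⟩
    funext i
    have h2 := hD (MvPolynomial.X i)
    rw [MvPolynomial.mkDerivation_X] at h2
    have h3 : algebraMap (MvPolynomial (Fin s) F) L (MvPolynomial.X i) = MvPolynomial.aeval ξ (P i) := by
      rw [hev, hP]; rfl
    rw [h3, hder] at h2
    rw [← h2]
    change J (fun j => D (ξ j)) i = _
    simp [J]
  have := LinearMap.finrank_le_finrank_of_surjective hsurj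
  simp at this
  exact_mod_cast this

end DimTheory
end IrrCodim

set_option linter.unusedSectionVars false
set_option linter.unusedVariables false
namespace IrrCodim
section Topo
open Module

variable (F : Type*) [Field F] (V : Type*) [AddCommGroup V] [Module F V] [FiniteDimensional F V]

/-- The vanishing ideal of a subset of `V`. -/
def vI (S : Set V) : Ideal (MvPolynomial (Module.Free.ChooseBasisIndex F V) F) where
  carrier := {p | ∀ z ∈ S, CV.evalP F V p z = 0}
  add_mem' := by
    intro a b ha hb z hz
    have h1 := ha z hz
    have h2 := hb z hz
    simp only [CV.evalP, map_add] at h1 h2 ⊢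
    rw [h1, h2, add_zero]
  zero_mem' := by intro z hz; simp [CV.evalP]
  smul_mem' := by
    intro c a ha z hz
    have h1 := ha z hz
    simp only [CV.evalP, smul_eq_mul, map_mul] at h1 ⊢
    rw [h1, mul_zero]

lemma mem_vI {S : Set V} {p} : p ∈ vI F V S ↔ ∀ z ∈ S, CV.evalP F V p z = 0 := Iff.rfl

lemma isOpen_basic (p : MvPolynomial (Module.Free.ChooseBasisIndex F V) F) :
    @IsOpen V (CV.zar F V) {z | CV.evalP F V p z ≠ 0} :=
  TopologicalSpace.isOpen_generateFrom_of_mem ⟨p, rfl⟩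

lemma prime_vI {S : Set V} (hS : S.Nonempty)
    (h : ∀ p q, (∃ z ∈ S, CV.evalP F V p z ≠ 0) → (∃ z ∈ S, CV.evalP F V q z ≠ 0) →
      ∃ z ∈ S, CV.evalP F V p z ≠ 0 ∧ CV.evalP F V q z ≠ 0) : (vI F V S).IsPrime := by
  constructor
  · rw [Ideal.ne_top_iff_one]
    intro h1
    obtain ⟨z, hz⟩ := hS
    have := h1 z hz
    simp [CV.evalP] at this
  · intro p q hpq
    by_contra! hc
    obtain ⟨hp, hq⟩ := hc
    rw [mem_vI] at hp hq
    push Not at hp hq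
    obtain ⟨z, hz, h1, h2⟩ := h p q hp hq
    have := hpq z hz
    simp only [CV.evalP, map_mul, mul_eq_zero] at this
    exact this.elim h1 h2

lemma isBasis_zar : @TopologicalSpace.IsTopologicalBasis V (CV.zar F V)
    {U | ∃ p : MvPolynomial (Module.Free.ChooseBasisIndex F V) F, U = {z | CV.evalP F V p z ≠ 0}} := by
  letI := CV.zar F V
  refine ⟨?_, ?_, rfl⟩
  · rintro _ ⟨p, rfl⟩ _ ⟨q, rfl⟩ z ⟨h1, h2⟩
    refine ⟨_, ⟨p * q, rfl⟩, ?_, ?_⟩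
    · simp only [CV.evalP, map_mul, Set.mem_setOf_eq] at h1 h2 ⊢
      exact mul_ne_zero h1 h2
    · intro w hw
      simp only [CV.evalP, map_mul, Set.mem_setOf_eq] at hw
      exact ⟨left_ne_zero_of_mul hw, right_ne_zero_of_mul hw⟩
  · refine Set.eq_univ_of_forall fun z => ?_
    exact Set.mem_sUnion.mpr ⟨_, ⟨1, rfl⟩, by simp [CV.evalP]⟩

lemma prime_vI_of_irr {X : Set V} (hX : @IsIrreducible V (CV.zar F V) X) : (vI F V X).IsPrime := by
  letI := CV.zar F V
  refine prime_vI F V hX.1 ?_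
  rintro p q ⟨z, hz, hp⟩ ⟨w, hw, hq⟩
  obtain ⟨u, hu, h1, h2⟩ := hX.2 _ _ (isOpen_basic F V p) (isOpen_basic F V q) ⟨z, hz, hp⟩ ⟨w, hw, hq⟩
  exact ⟨u, hu, h1, h2⟩

theorem dimSet_le {X : Set V} :
    CV.dimSet F V X ≤ ringKrullDim (MvPolynomial (Module.Free.ChooseBasisIndex F V) F ⧸ vI F V X) := by
  letI : TopologicalSpace V := CV.zar F V
  unfold CV.dimSet topologicalKrullDim ringKrullDim
  rw [← Order.krullDim_orderDual (α := PrimeSpectrum _)]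
  let J : TopologicalSpace.IrreducibleCloseds X → Ideal (MvPolynomial (Module.Free.ChooseBasisIndex F V) F) :=
    fun Z => vI F V (Subtype.val '' (Z : Set X))
  have hJp : ∀ Z, (J Z).IsPrime := by
    intro Z
    apply prime_vI_of_irr
    exact Z.isIrreducible.image _ continuous_subtype_val.continuousOn
  have hJX : ∀ Z, vI F V X ≤ J Z := by
    rintro Z p hp _ ⟨z, hz, rfl⟩
    exact hp _ z.2
  have hker : ∀ Z, RingHom.ker (Ideal.Quotient.mk (vI F V X)) ≤ J Z := by
    intro Z; rw [Ideal.mk_ker]; exact hJX Z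
  have hmap : ∀ Z, Ideal.comap (Ideal.Quotient.mk (vI F V X)) (Ideal.map (Ideal.Quotient.mk (vI F V X)) (J Z)) = J Z := by
    intro Z
    rw [Ideal.comap_map_of_surjective _ Ideal.Quotient.mk_surjective]
    exact sup_eq_left.mpr (hker Z)
  refine Order.krullDim_le_of_strictMono (fun Z => OrderDual.toDual
    (⟨Ideal.map (Ideal.Quotient.mk (vI F V X)) (J Z), 
      haveI := hJp Z
      Ideal.map_isPrime_of_surjective Ideal.Quotient.mk_surjective (hker Z)⟩ :
        PrimeSpectrum (MvPolynomial (Module.Free.ChooseBasisIndex F V) F ⧸ vI F V X))) ?_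
  intro Z Z' hlt
  have hle : (Z : Set X) ⊆ Z' := hlt.le
  have hne : ¬ (Z' : Set X) ⊆ Z := fun h => hlt.not_ge h
  obtain ⟨x, hx', hx⟩ := Set.not_subset.mp hne
  have hop : IsOpen ((Z : Set X)ᶜ) := Z.isClosed.isOpen_compl
  obtain ⟨U, hU, hUe⟩ := isOpen_induced_iff.mp hop
  have hxU : x.1 ∈ U := by
    have : x ∈ Subtype.val ⁻¹' U := hUe ▸ hx
    exact this
  obtain ⟨_, ⟨p, rfl⟩, hxp, hpU⟩ := (isBasis_zar F V).exists_subset_of_mem_open hxU hU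
  have hpZ : p ∈ J Z := by
    rintro _ ⟨z, hz, rfl⟩
    by_contra h0
    have : z ∈ (Z : Set X)ᶜ := by
      rw [← hUe]; exact hpU h0
    exact this hz
  have hpZ' : p ∉ J Z' := fun h => hxp (h _ ⟨x, hx', rfl⟩)
  have hJle : J Z' ≤ J Z := by
    rintro q hq _ ⟨z, hz, rfl⟩
    exact hq _ ⟨z, hle hz, rfl⟩
  rw [OrderDual.toDual_lt_toDual]
  refine lt_of_le_of_ne (Ideal.map_mono hJle) ?_
  intro he
  have he' := congrArg PrimeSpectrum.asIdeal he
  have := congrArg (Ideal.comap (Ideal.Quotient.mk (vI F V X))) he'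
  simp only [hmap] at this
  exact hpZ' (this ▸ hpZ)

end Topo
end IrrCodim

set_option linter.unusedSectionVars false
set_option linter.unusedVariables false
set_option linter.style.haveILetI false
namespace IrrCodim
section BC
open Module TensorProduct LieAlgebra

variable {F L Q : Type*} [Field F] [Field L] [Algebra F L] [LieRing Q] [LieAlgebra F Q]
  [FiniteDimensional F Q]

lemma killing_tmul (a b : L) (u v : Q) :
    killingForm L (L ⊗[F] Q) (a ⊗ₜ u) (b ⊗ₜ v) = a * b * algebraMap F L (killingForm F Q u v) := by
  have : killingForm L (L ⊗[F] Q) = (killingForm F Q).baseChange L :=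
    LieModule.traceForm_baseChange F Q Q L
  rw [this]
  simp [Algebra.smul_def]
  try ring

lemma isKilling_bc [IsKilling F Q] : IsKilling L (L ⊗[F] Q) := by
  constructor
  rw [eq_bot_iff]
  intro x hx
  rw [LieIdeal.mem_killingCompl] at hx
  classical
  let c := Module.Free.chooseBasis F Q
  let hB := IsKilling.killingForm_nondegenerate F Q
  let c' := LinearMap.BilinForm.dualBasis (killingForm F Q) hB c
  let cL := Algebra.TensorProduct.basis L c
  have hx0 : ∀ i, cL.repr x i = 0 := by
    intro i
    have h := hx (1 ⊗ₜ c' i) trivial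
    rw [← cL.sum_repr x, map_sum] at h
    simp only [map_smul, cL, Algebra.TensorProduct.basis_apply, killing_tmul, c'] at h
    simp only [LinearMap.BilinForm.apply_dualBasis_left] at h
    simpa using h
  have : x = 0 := cL.ext_elem (fun i => by simpa using hx0 i)
  simpa using this

lemma isDer_bc (D : Derivation F L L) :
    IsDer L (fun w : L ⊗[F] Q => LinearMap.rTensor Q (D : L →ₗ[F] L) w) where
  add a b := map_add _ a b
  lie a b := by
    induction a with
    | zero => simp
    | add a₁ a₂ h1 h2 => 
      simp only [add_lie, map_add] at h1 h2 ⊢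
      rw [h1, h2]; abel
    | tmul s u =>
      induction b with
      | zero => simp
      | add b₁ b₂ h1 h2 =>
        simp only [lie_add, map_add] at h1 h2 ⊢
        rw [h1, h2]; abel
      | tmul t v =>
        simp only [ExtendScalars.bracket_tmul, LinearMap.rTensor_tmul, Derivation.coeFn_coe,
          Derivation.leibniz, smul_eq_mul, ← TensorProduct.add_tmul]
        congr 1
        ring
  form := by
    have key : ∀ a b : L ⊗[F] Q, killingForm L (L ⊗[F] Q) (LinearMap.rTensor Q (D : L →ₗ[F] L) a) b +
        killingForm L (L ⊗[F] Q) a (LinearMap.rTensor Q (D : L →ₗ[F] L) b) =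
        D (killingForm L (L ⊗[F] Q) a b) := by
      intro a b
      induction a with
      | zero => simp
      | add a₁ a₂ h1 h2 => 
        simp only [map_add, LinearMap.add_apply] at h1 h2 ⊢
        rw [← h1, ← h2]; ring
      | tmul s u =>
        induction b with
        | zero => simp
        | add b₁ b₂ h1 h2 =>
          simp only [map_add] at h1 h2 ⊢
          rw [← h1, ← h2]; ring
        | tmul t v =>
          simp only [LinearMap.rTensor_tmul, Derivation.coeFn_coe, killing_tmul,
            Derivation.leibniz, smul_eq_mul, Derivation.map_algebraMap, mul_zero]
          ring
    intro a b h
    rw [key, h, map_zero]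

/-- The matrix of `w ↦ ([u,w],[v,w])`. -/
def cM {K G κ : Type*} [Field K] [LieRing G] [LieAlgebra K G] [Fintype κ] [DecidableEq κ]
    (c : Basis κ K G) (u v : G) : Matrix (κ ⊕ κ) κ K :=
  Matrix.fromRows (LinearMap.toMatrix c c (ad K G u)) (LinearMap.toMatrix c c (ad K G v))

lemma cM_rank {K G κ : Type*} [Field K] [LieRing G] [LieAlgebra K G] [Fintype κ] [DecidableEq κ]
    (c : Basis κ K G) (u v : G) :
    (cM c u v).rank + finrank K ↥(LinearMap.ker (ad K G u) ⊓ LinearMap.ker (ad K G v)) =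
      finrank K G := by
  haveI := c.finiteDimensional_of_finite
  have h1 : cM c u v = LinearMap.toMatrix c (c.prod c) ((ad K G u).prod (ad K G v)) := by
    ext i j
    rcases i with i | i <;> simp [cM, LinearMap.toMatrix_apply]
  rw [h1, Matrix.rank_eq_finrank_range_toLin _ (c.prod c) c, Matrix.toLin_toMatrix,
    ← LinearMap.ker_prod]
  exact LinearMap.finrank_range_add_finrank_ker _

lemma rank_map_ge {m n : Type*} [Fintype m] [Fintype n] (A : Matrix m n F) :
    A.rank ≤ (A.map (algebraMap F L)).rank := by
  obtain ⟨e, f, h⟩ := exists_minor A A.rank le_rfl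
  apply le_rank_of_minor _ _ e f
  rw [Matrix.submatrix_map]
  have := RingHom.map_det (algebraMap F L) (A.submatrix e f)
  rw [RingHom.mapMatrix_apply] at this
  rw [← this]
  simpa using h

lemma ker_bc (a : Q) :
    finrank L (LinearMap.ker (ad L (L ⊗[F] Q) (1 ⊗ₜ a))) ≤ finrank F (LinearMap.ker (ad F Q a)) := by
  classical
  let c := Module.Free.chooseBasis F Q
  let cL := Algebra.TensorProduct.basis L c
  have h1 := cM_rank c a a
  have h2 := cM_rank cL (1 ⊗ₜ a) (1 ⊗ₜ a)
  have h3 : cM cL (1 ⊗ₜ a) (1 ⊗ₜ a) = (cM c a a).map (algebraMap F L) := by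
    ext i j
    rcases i with i | i <;> simp [cM, LinearMap.toMatrix_apply, cL]
  rw [h3, inf_idem, Module.finrank_baseChange] at h2
  rw [inf_idem] at h1
  have := rank_map_ge (L := L) (cM c a a)
  omega

lemma ad_bc_repr {κ : Type*} (c : Basis κ F Q) (t : L) (u w : Q) (l : κ) :
    (Algebra.TensorProduct.basis L c).repr ⁅t ⊗ₜ[F] u, (1 : L) ⊗ₜ[F] w⁆ l =
      t * algebraMap F L (c.repr ⁅u, w⁆ l) := by
  simp

end BC
end IrrCodim

set_option linter.unusedSectionVars false
set_option linter.unusedVariables false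
set_option linter.style.haveILetI false
namespace IrrCodim
section Generic
open Module TensorProduct LieAlgebra

variable {F V Q : Type*} [Field F] [IsAlgClosed F] [CharZero F] [AddCommGroup V] [Module F V]
  [FiniteDimensional F V] [LieRing Q] [LieAlgebra F Q] [FiniteDimensional F Q] [IsKilling F Q]

/-- transfer of a rank bound from the points of `X` to a generic point. -/
lemma rank_generic {L : Type*} [Field L] [Algebra F L] (X : Set V)
    (ξ : Module.Free.ChooseBasisIndex F V → L)
    (hξ : ∀ p ∈ vI F V X, MvPolynomial.aeval ξ p = 0) {m n : Type*} [Fintype m] [Fintype n]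
    (M : Matrix m n (MvPolynomial (Module.Free.ChooseBasisIndex F V) F)) (t : ℕ)
    (h : ∀ z ∈ X, (M.map fun p => CV.evalP F V p z).rank < t) :
    (M.map fun p => MvPolynomial.aeval ξ p).rank < t := by
  by_contra! hc
  obtain ⟨e, f, hdet⟩ := exists_minor _ t hc
  apply hdet
  have h1 : (M.submatrix e f).det ∈ vI F V X := by
    intro z hz
    by_contra h0
    have h2 := h z hz
    refine absurd (le_rank_of_minor _ t e f ?_) (not_le.mpr h2)
    rw [Matrix.submatrix_map]
    have := RingHom.map_det (MvPolynomial.aeval (CV.coordFn F V z) : _ →ₐ[F] F).toRingHom (M.submatrix e f)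
    rw [RingHom.mapMatrix_apply] at this
    intro h3
    exact h0 (this.trans h3)
  have h2 := hξ _ h1
  have := RingHom.map_det (MvPolynomial.aeval ξ : _ →ₐ[F] L).toRingHom (M.submatrix e f)
  rw [RingHom.mapMatrix_apply] at this
  rw [Matrix.submatrix_map]
  exact this.symm.trans h2

theorem generic (p1 p2 : V →ₗ[F] Q) (hp : ∀ u v, ∃ z, p1 z = u ∧ p2 z = v) (X : Set V)
    (hX : @IsIrreducible V (CV.zar F V) X) (r : ℕ) (a : Q)
    (ha : finrank F (LinearMap.ker (ad F Q a)) ≤ r)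
    (h1 : ∀ z ∈ X, ⁅p1 z, p2 z⁆ = 0)
    (h2 : ∀ z ∈ X, r < finrank F ↥(LinearMap.ker (ad F Q (p1 z)) ⊓ LinearMap.ker (ad F Q (p2 z)))) :
    ∃ d : ℕ, CV.dimSet F V X ≤ d ∧ d + 2 + finrank F Q ≤ finrank F V + r := by
  classical
  haveI := prime_vI_of_irr F V hX
  let ι := Module.Free.ChooseBasisIndex F V
  let b := Module.Free.chooseBasis F V
  let R := MvPolynomial ι F
  let A := R ⧸ vI F V X
  let L := AlgebraicClosure (FractionRing A)
  haveI : FaithfulSMul A L := by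
    refine (faithfulSMul_iff_algebraMap_injective A L).mpr ?_
    rw [IsScalarTower.algebraMap_eq A (FractionRing A) L]
    exact (algebraMap (FractionRing A) L).injective.comp (IsFractionRing.injective A (FractionRing A))
  haveI : Algebra.IsAlgebraic A L :=
    (IsFractionRing.comap_isAlgebraic_iff (A := A) (K := FractionRing A) (C := L)).mpr inferInstance
  haveI : CharZero L := charZero_of_injective_algebraMap (algebraMap F L).injective
  let π : R →ₐ[F] A := Ideal.Quotient.mkₐ F (vI F V X)
  let ξ : ι → L := fun j => algebraMap A L (π (MvPolynomial.X j))
  have hdim := dim_le_rank (L := L) π (Ideal.Quotient.mkₐ_surjective F (vI F V X))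
  set E := LinearMap.range (evDer F (fun j => algebraMap A L (π (MvPolynomial.X j)))) with hE
  refine ⟨finrank L E, (dimSet_le F V).trans hdim, ?_⟩
  have hev : ∀ p : R, MvPolynomial.aeval ξ p = algebraMap A L (π p) := by
    intro p
    have : MvPolynomial.aeval ξ = (IsScalarTower.toAlgHom F A L).comp π := by
      apply MvPolynomial.algHom_ext
      intro i; simp [ξ]
    rw [this]; rfl
  have hξ : ∀ p ∈ vI F V X, MvPolynomial.aeval ξ p = 0 := by
    intro p hp
    rw [hev]
    have : π p = 0 := Ideal.Quotient.eq_zero_iff_mem.mpr hp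
    rw [this, map_zero]
  haveI : IsKilling L (L ⊗[F] Q) := isKilling_bc
  -- the linear maps induced on the base change
  let P : (V →ₗ[F] Q) → (ι → L) →ₗ[L] (L ⊗[F] Q) := fun p =>
    Fintype.linearCombination L (fun j => (1 : L) ⊗ₜ[F] p (b j))
  have hPa : ∀ p v, P p v = ∑ j, v j ⊗ₜ[F] p (b j) := by
    intro p v
    simp [P, Fintype.linearCombination_apply, TensorProduct.smul_tmul']
  let Ψ : (ι → L) →ₗ[L] (L ⊗[F] Q) × (L ⊗[F] Q) := (P p1).prod (P p2)
  have hz : ∀ z : V, z = ∑ j, CV.coordFn F V z j • b j := fun z => (b.sum_repr z).symm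
  have hPz : ∀ (p : V →ₗ[F] Q) (t : L) (z : V),
      P p (fun j => t * algebraMap F L (CV.coordFn F V z j)) = t ⊗ₜ p z := by
    intro p t z
    rw [hPa]
    conv_rhs => rw [hz z]
    rw [map_sum, TensorProduct.tmul_sum]
    refine Finset.sum_congr rfl fun j _ => ?_
    rw [map_smul, mul_comm, ← Algebra.smul_def, TensorProduct.smul_tmul]
  have hΨ : Function.Surjective Ψ := by
    rw [← LinearMap.range_eq_top, eq_top_iff]
    have hl : ∀ w : L ⊗[F] Q, (w, (0 : L ⊗[F] Q)) ∈ LinearMap.range Ψ := by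
      intro w
      induction w with
      | zero => exact zero_mem _
      | add w1 w2 i1 i2 => simpa using add_mem i1 i2
      | tmul t u =>
        obtain ⟨z, hz1, hz2⟩ := hp u 0
        refine ⟨fun j => t * algebraMap F L (CV.coordFn F V z j), ?_⟩
        exact Prod.ext ((hPz p1 t z).trans (by rw [hz1])) ((hPz p2 t z).trans (by rw [hz2, TensorProduct.tmul_zero]))
    have hr : ∀ w : L ⊗[F] Q, ((0 : L ⊗[F] Q), w) ∈ LinearMap.range Ψ := by
      intro w
      induction w with
      | zero => exact zero_mem _
      | add w1 w2 i1 i2 => simpa using add_mem i1 i2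
      | tmul t u =>
        obtain ⟨z, hz1, hz2⟩ := hp 0 u
        refine ⟨fun j => t * algebraMap F L (CV.coordFn F V z j), ?_⟩
        exact Prod.ext ((hPz p1 t z).trans (by rw [hz1, TensorProduct.tmul_zero])) ((hPz p2 t z).trans (by rw [hz2]))
    rintro ⟨w1, w2⟩ -
    simpa using add_mem (hl w1) (hr w2)
  set x := P p1 ξ with hx
  set y := P p2 ξ with hy
  let c := Module.Free.chooseBasis F Q
  let cL := Algebra.TensorProduct.basis L c
  have hxy : ⁅x, y⁆ = 0 := by
    apply cL.ext_elem
    intro l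
    let p : R := ∑ i, ∑ j, MvPolynomial.C (c.repr ⁅p1 (b i), p2 (b j)⁆ l) * (MvPolynomial.X i * MvPolynomial.X j)
    have hpX : p ∈ vI F V X := by
      intro z hzX
      have h3 := h1 z hzX
      have h4 : c.repr ⁅p1 z, p2 z⁆ l = CV.evalP F V p z := by
        conv_lhs => rw [hz z]
        simp only [map_sum, map_smul, sum_lie, lie_sum, smul_lie, lie_smul,
          Finsupp.coe_finsetSum, Finset.sum_apply, Finsupp.smul_apply, smul_eq_mul, CV.evalP, p,
          map_mul, MvPolynomial.aeval_C, MvPolynomial.aeval_X, Algebra.algebraMap_self, RingHom.id_apply]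
        simp only [Finset.mul_sum]
        rw [Finset.sum_comm]
        refine Finset.sum_congr rfl fun i _ => Finset.sum_congr rfl fun j _ => by ring
      rw [← h4, h3]; simp
    have h5 := hξ p hpX
    have h6 : cL.repr ⁅x, y⁆ l = MvPolynomial.aeval ξ p := by
      rw [hx, hy, hPa, hPa]
      simp only [map_sum, sum_lie, lie_sum, ExtendScalars.bracket_tmul,
        Finsupp.coe_finsetSum, Finset.sum_apply, cL, Algebra.TensorProduct.basis_repr_tmul,
        Finsupp.smul_apply, Finsupp.mapRange_apply, p, map_mul, MvPolynomial.aeval_C,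
        MvPolynomial.aeval_X, smul_eq_mul]
      rw [Finset.sum_comm]
      refine Finset.sum_congr rfl fun i _ => Finset.sum_congr rfl fun j _ => by ring
    rw [h6, h5]; simp
  have hrk : r < finrank L ↥(LinearMap.ker (ad L (L ⊗[F] Q) x) ⊓ LinearMap.ker (ad L (L ⊗[F] Q) y)) := by
    let M1 : (V →ₗ[F] Q) → Matrix _ _ R := fun p => Matrix.of fun l i =>
      ∑ j, MvPolynomial.C (c.repr ⁅p (b j), c i⁆ l) * MvPolynomial.X j
    let M := Matrix.fromRows (M1 p1) (M1 p2)
    have e1 : ∀ z, (M.map fun q => CV.evalP F V q z) = cM c (p1 z) (p2 z) := by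
      intro z
      have e0 : ∀ (p : V →ₗ[F] Q) l i, CV.evalP F V (M1 p l i) z = c.repr ⁅p z, c i⁆ l := by
        intro p l i
        conv_rhs => rw [hz z]
        simp only [map_sum, map_smul, sum_lie, smul_lie,
          Finsupp.coe_finsetSum, Finset.sum_apply, Finsupp.smul_apply, smul_eq_mul, CV.evalP, M1,
          Matrix.of_apply,
          map_mul, MvPolynomial.aeval_C, MvPolynomial.aeval_X, Algebra.algebraMap_self, RingHom.id_apply]
        refine Finset.sum_congr rfl fun j _ => by ring
      ext l i
      rcases l with l | l <;> simp [M, cM, LinearMap.toMatrix_apply, e0]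
    have e2 : (M.map fun q => MvPolynomial.aeval ξ q) = cM cL x y := by
      have e0 : ∀ (p : V →ₗ[F] Q) l i, MvPolynomial.aeval ξ (M1 p l i) = cL.repr ⁅P p ξ, cL i⁆ l := by
        intro p l i
        rw [hPa]
        simp only [map_sum, sum_lie, ExtendScalars.bracket_tmul,
          Finsupp.coe_finsetSum, Finset.sum_apply, cL, Algebra.TensorProduct.basis_apply,
          Algebra.TensorProduct.basis_repr_tmul, M1, Matrix.of_apply,
          Finsupp.smul_apply, Finsupp.mapRange_apply, map_mul, MvPolynomial.aeval_C,
          MvPolynomial.aeval_X, smul_eq_mul, mul_one]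
        refine Finset.sum_congr rfl fun j _ => by ring
      ext l i
      rcases l with l | l <;> simp [M, cM, LinearMap.toMatrix_apply, e0, hx, hy]
    have e3 : ∀ z ∈ X, (M.map fun q => CV.evalP F V q z).rank < finrank F Q - r := by
      intro z hzX
      rw [e1]
      have := cM_rank c (p1 z) (p2 z)
      have := h2 z hzX
      omega
    have e4 := rank_generic X ξ hξ M _ e3
    rw [e2] at e4
    have := cM_rank cL x y
    rw [Module.finrank_baseChange] at this
    omega
  have hB := thmB x y ((1 : L) ⊗ₜ[F] a) r (E.map Ψ) (by
    rintro _ ⟨_, ⟨D, rfl⟩, rfl⟩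
    refine ⟨_, isDer_bc D, ?_⟩
    have : ∀ p : V →ₗ[F] Q, P p (evDer F ξ D) = LinearMap.rTensor Q (D : L →ₗ[F] L) (P p ξ) := by
      intro p
      rw [hPa, hPa, map_sum]
      rfl
    exact Prod.ext (this p1) (this p2)) hxy ((ker_bc a).trans ha) hrk
  rw [Module.finrank_baseChange] at hB
  -- compare `E` and its image
  have k1 := LinearMap.finrank_range_add_finrank_ker (Ψ.domRestrict E)
  have k2 : finrank L (LinearMap.range (Ψ.domRestrict E)) = finrank L (E.map Ψ) := by
    rw [LinearMap.range_domRestrict]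
  have k3 : finrank L (LinearMap.ker (Ψ.domRestrict E)) ≤ finrank L (LinearMap.ker Ψ) := by
    have : (LinearMap.ker (Ψ.domRestrict E)).map E.subtype ≤ LinearMap.ker Ψ := by
      rintro _ ⟨v, hv, rfl⟩
      exact hv
    have h7 := Submodule.finrank_mono this
    rwa [← LinearEquiv.finrank_eq (Submodule.equivMapOfInjective _ (Submodule.injective_subtype E) _)] at h7
  have k4 := LinearMap.finrank_range_add_finrank_ker Ψ
  rw [LinearMap.range_eq_top.mpr hΨ, finrank_top, Module.finrank_prod, Module.finrank_baseChange,
    Module.finrank_fintype_fun_eq_card] at k4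
  have k5 : finrank F V = Fintype.card ι := Module.finrank_eq_card_basis b
  omega

end Generic
end IrrCodim

set_option linter.unusedSectionVars false
set_option linter.unusedVariables false
set_option linter.style.haveILetI false
namespace IrrCodim
section Reg
open LieAlgebra LieModule Module
variable {K G : Type*} [Field K] [IsAlgClosed K] [CharZero K] [LieRing G] [LieAlgebra K G]
  [FiniteDimensional K G]

lemma exists_regular [IsKilling K G] (H : LieSubalgebra K G) [H.IsCartanSubalgebra] :
    ∃ a : G, finrank K (LinearMap.ker (ad K G a)) ≤ finrank K H := by
  obtain ⟨s', hs'⟩ := Module.Dual.exists_forall_ne_zero_of_forall_exists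
    (fun β : {β : Weight K H G // β.IsNonZero} => Weight.toLinear K H G β.1) (by
      rintro ⟨β, hβ⟩
      by_contra! hc
      apply hβ
      have : Weight.toLinear K H G β = 0 := LinearMap.ext hc
      simpa using this)
  have hs : (ad K G s'.1).IsSemisimple :=
    LieAlgebra.IsKilling.isSemisimple_ad_of_mem_isCartanSubalgebra s'.2
  refine ⟨s'.1, ?_⟩
  set s := s'.1 with hsdef
  have hex : ∀ β : Weight K H G, β s' = 0 → β.IsZero := by
    intro β hβ
    by_contra h
    exact hs' ⟨β, h⟩ hβ
  have hl : LinearMap.ker (ad K G s) ≤ H.toSubmodule := by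
    intro v hv
    have hv' : v ∈ (⨆ β : Weight K H G, genWeightSpace G β) := by
      rw [LieModule.iSup_genWeightSpace_eq_top']; trivial
    have key : ∃ w ∈ H.toSubmodule, ⁅s, w⁆ = 0 ∧ ∃ u, v = w + ⁅s, u⁆ := by
      clear hv
      induction hv' using LieSubmodule.iSup_induction' with
      | mem β v hv =>
        have e1 : ⁅s, v⁆ = β s' • v := IsKilling.lie_eq_smul_of_mem_rootSpace hv s'
        by_cases hβ : β s' = 0
        · refine ⟨v, ?_, by rw [e1, hβ, zero_smul], 0, by simp⟩
          have : (genWeightSpace G β : LieSubmodule K H G) = H.toLieSubmodule := by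
            rw [(hex β hβ).eq]; exact rootSpace_zero_eq K G H
          rw [this] at hv
          exact hv
        · refine ⟨0, zero_mem _, by simp, (β s')⁻¹ • v, ?_⟩
          rw [lie_smul, e1, smul_smul, inv_mul_cancel₀ hβ]; simp
      | zero => exact ⟨0, zero_mem _, by simp, 0, by simp⟩
      | add v1 v2 _ _ i1 i2 =>
        obtain ⟨w1, hw1, z1, u1, rfl⟩ := i1
        obtain ⟨w2, hw2, z2, u2, rfl⟩ := i2
        exact ⟨w1 + w2, add_mem hw1 hw2, by rw [lie_add, z1, z2, add_zero], u1 + u2,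
          by rw [lie_add]; abel⟩
    obtain ⟨w, hw, hws, u, rfl⟩ := key
    have : ⁅s, u⁆ = 0 := by
      apply ker_sq_of_semisimple hs
      have h3 : ⁅s, w + ⁅s, u⁆⁆ = 0 := hv
      rw [lie_add, hws, zero_add] at h3
      exact h3
    rw [this, add_zero]
    exact hw
  exact Submodule.finrank_mono hl

/-- the quotient map by the center, as a morphism of Lie algebras. -/
def qm (K G : Type*) [Field K] [LieRing G] [LieAlgebra K G] : G →ₗ⁅K⁆ G ⧸ center K G :=
  { (center K G).toSubmodule.mkQ with map_lie' := fun {a b} => rfl }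

lemma qm_surj : Function.Surjective (qm K G) := (center K G).toSubmodule.mkQ_surjective

lemma qm_zero {v : G} : qm K G v = 0 ↔ v ∈ center K G :=
  Submodule.Quotient.mk_eq_zero (center K G).toSubmodule

lemma qm_ker : LinearMap.ker (qm K G : G →ₗ[K] G ⧸ center K G) = (center K G).toSubmodule := by
  ext v; exact qm_zero

lemma mem_center' {v : G} : v ∈ center K G ↔ ∀ u : G, ⁅u, v⁆ = 0 :=
  LieModule.mem_maxTrivSubmodule _ _ _ _

lemma trivRad (hred : radical K G = center K G) : HasTrivialRadical K (G ⧸ center K G) := by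
  rw [hasTrivialRadical_iff_no_abelian_ideals]
  intro I hI
  let J : LieIdeal K G := LieIdeal.comap (qm K G) I
  have hJ : ∀ v, v ∈ J ↔ qm K G v ∈ I := fun v => LieIdeal.mem_comap
  have hs : derivedSeriesOfIdeal K G 2 J = ⊥ := by
    have h1 : derivedSeriesOfIdeal K G 1 J ≤ center K G := by
      rw [derivedSeriesOfIdeal_succ, derivedSeriesOfIdeal_zero, LieSubmodule.lie_le_iff]
      intro u hu v hv
      have := hI.trivial ⟨_, (hJ u).mp hu⟩ ⟨_, (hJ v).mp hv⟩
      have h2 : ⁅qm K G u, qm K G v⁆ = 0 := congrArg Subtype.val this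
      rw [← LieHom.map_lie] at h2
      exact qm_zero.mp h2
    rw [derivedSeriesOfIdeal_succ, eq_bot_iff, LieSubmodule.lie_le_iff]
    intro u hu v hv
    have := h1 hv
    rw [LieModule.mem_maxTrivSubmodule] at this
    rw [this]; exact zero_mem _
  have hsol : IsSolvable J := (isSolvable_iff (R := K) (L := J)).mpr ⟨2, (LieIdeal.derivedSeries_eq_bot_iff (I := J) 2).mpr hs⟩
  have hle := (LieIdeal.solvable_iff_le_radical K G J).mp hsol
  rw [hred] at hle
  rw [eq_bot_iff]
  intro q hq
  obtain ⟨v, rfl⟩ := qm_surj q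
  have h3 := hle ((hJ v).mpr hq)
  rw [qm_zero.mpr h3]; exact zero_mem _

lemma center_le (t : LieSubalgebra K G) [ht : t.IsCartanSubalgebra] :
    (center K G).toSubmodule ≤ t.toSubmodule := by
  intro v hv
  change v ∈ t
  rw [← ht.self_normalizing, LieSubalgebra.mem_normalizer_iff]
  intro y hy
  have h : ⁅y, v⁆ = 0 := mem_center'.mp hv y
  rw [← lie_skew, h, neg_zero]
  exact zero_mem _

lemma cartan_map (t : LieSubalgebra K G) [ht : t.IsCartanSubalgebra] :
    (t.map (qm K G)).IsCartanSubalgebra := by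
  refine ⟨?_, ?_⟩
  · have hn : LieRing.IsNilpotent t := ht.nilpotent
    let f : t →ₗ⁅K⁆ t.map (qm K G) :=
      { toFun := fun v => ⟨qm K G v.1, (LieSubalgebra.mem_map _ _ _).mpr ⟨v.1, v.2, rfl⟩⟩
        map_add' := fun a b => Subtype.ext (map_add (qm K G) a.1 b.1)
        map_smul' := fun c a => Subtype.ext (map_smul (qm K G) c a.1)
        map_lie' := fun {a b} => Subtype.ext (LieHom.map_lie (qm K G) a.1 b.1) }
    have hf : Function.Surjective f := by
      rintro ⟨w, hw⟩
      obtain ⟨v, hv, rfl⟩ := (LieSubalgebra.mem_map _ _ _).mp hw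
      exact ⟨⟨v, hv⟩, rfl⟩
    exact hf.lieAlgebra_isNilpotent
  · apply le_antisymm _ (LieSubalgebra.le_normalizer _)
    intro w hw
    obtain ⟨v, rfl⟩ := qm_surj w
    rw [LieSubalgebra.mem_normalizer_iff] at hw
    refine (LieSubalgebra.mem_map _ _ _).mpr ⟨v, ?_, rfl⟩
    rw [← ht.self_normalizing, LieSubalgebra.mem_normalizer_iff]
    intro y hy
    obtain ⟨u, hu, huv⟩ := (LieSubalgebra.mem_map _ _ _).mp
      (hw (qm K G y) ((LieSubalgebra.mem_map _ _ _).mpr ⟨y, hy, rfl⟩))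
    rw [← LieHom.map_lie] at huv
    have h0 : ⁅v, y⁆ - u ∈ center K G := by
      apply qm_zero.mp
      rw [map_sub, huv, sub_self]
    have h1 : ⁅v, y⁆ - u ∈ t := center_le t h0
    have := add_mem h1 hu
    simpa using this

/-- dimension of the image of a subspace in the quotient by the center. -/
lemma finrank_map_le (S : Submodule K G) :
    finrank K S ≤ finrank K (S.map (qm K G : G →ₗ[K] G ⧸ center K G)) +
      finrank K (center K G) := by
  set f := (qm K G : G →ₗ[K] G ⧸ center K G)
  have k1 := LinearMap.finrank_range_add_finrank_ker (f.domRestrict S)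
  rw [LinearMap.range_domRestrict] at k1
  have k3 : finrank K (LinearMap.ker (f.domRestrict S)) ≤ finrank K (center K G) := by
    have : (LinearMap.ker (f.domRestrict S)).map S.subtype ≤ (center K G).toSubmodule := by
      rintro _ ⟨v, hv, rfl⟩
      exact qm_zero.mp hv
    have h7 := Submodule.finrank_mono this
    rwa [← LinearEquiv.finrank_eq (Submodule.equivMapOfInjective _ (Submodule.injective_subtype S) _)] at h7
  omega

lemma finrank_map_eq (S : Submodule K G) (hS : (center K G).toSubmodule ≤ S) :
    finrank K (S.map (qm K G : G →ₗ[K] G ⧸ center K G)) + finrank K (center K G) =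
      finrank K S := by
  refine le_antisymm ?_ (finrank_map_le S)
  set f := (qm K G : G →ₗ[K] G ⧸ center K G)
  have k1 := LinearMap.finrank_range_add_finrank_ker (f.domRestrict S)
  rw [LinearMap.range_domRestrict] at k1
  have k3 : finrank K (center K G) ≤ finrank K (LinearMap.ker (f.domRestrict S)) := by
    have : (center K G).toSubmodule ≤ (LinearMap.ker (f.domRestrict S)).map S.subtype := by
      intro v hv
      exact ⟨⟨v, hS hv⟩, qm_zero.mpr hv, rfl⟩
    have h7 := Submodule.finrank_mono this
    rwa [← LinearEquiv.finrank_eq (Submodule.equivMapOfInjective _ (Submodule.injective_subtype S) _)] at h7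
  omega

theorem final (hred : radical K G = center K G)
    (t : LieSubalgebra K G) (ht : t.IsCartanSubalgebra)
    (X : Set (G × G)) (hXsub : X ⊆ Cirr K G t)
    (hXirr : @IsIrreducible (G × G) (CV.zar K (G × G)) X) :
    CV.dimSet K (G × G) X + 2
      ≤ (((Module.finrank K G + Module.finrank K ↥t : ℕ) : ℕ∞) : WithBot ℕ∞) := by
  haveI := trivRad hred
  haveI : IsKilling K (G ⧸ center K G) := inferInstance
  haveI := cartan_map t
  obtain ⟨a, ha⟩ := exists_regular (t.map (qm K G))
  set f := (qm K G : G →ₗ[K] G ⧸ center K G) with hf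
  have e1 : finrank K (t.map (qm K G)) + finrank K (center K G) = finrank K t :=
    finrank_map_eq t.toSubmodule (center_le t)
  have e2 : finrank K (G ⧸ center K G) + finrank K (center K G) = finrank K G :=
    Submodule.finrank_quotient_add_finrank (center K G).toSubmodule
  obtain ⟨d, hd, hd2⟩ := generic (f ∘ₗ LinearMap.fst K G G) (f ∘ₗ LinearMap.snd K G G) (by
      intro u v
      obtain ⟨u, rfl⟩ := qm_surj u
      obtain ⟨v, rfl⟩ := qm_surj v
      exact ⟨(u, v), rfl, rfl⟩) X hXirr (finrank K (t.map (qm K G))) a ha (by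
      intro z hz
      have h : ⁅z.1, z.2⁆ = 0 := (hXsub hz).1
      change ⁅qm K G z.1, qm K G z.2⁆ = 0
      rw [← LieHom.map_lie, h, map_zero]) (by
      intro z hz
      have h : finrank K t < finrank K ↥(cent K z.1 ⊓ cent K z.2) := (hXsub hz).2
      have h1 := finrank_map_le (cent K z.1 ⊓ cent K z.2)
      have h2 : (cent K z.1 ⊓ cent K z.2).map f ≤
          LinearMap.ker (ad K (G ⧸ center K G) (qm K G z.1)) ⊓
          LinearMap.ker (ad K (G ⧸ center K G) (qm K G z.2)) := by
        rintro _ ⟨v, ⟨hv1, hv2⟩, rfl⟩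
        have hv1 : ⁅z.1, v⁆ = 0 := hv1
        have hv2 : ⁅z.2, v⁆ = 0 := hv2
        refine ⟨?_, ?_⟩
        · change ⁅qm K G z.1, qm K G v⁆ = 0
          rw [← LieHom.map_lie, hv1, map_zero]
        · change ⁅qm K G z.2, qm K G v⁆ = 0
          rw [← LieHom.map_lie, hv2, map_zero]
      have h3 := Submodule.finrank_mono h2
      rw [hf] at h3
      change _ < finrank K ↥(LinearMap.ker (ad K (G ⧸ center K G) (qm K G z.1)) ⊓
          LinearMap.ker (ad K (G ⧸ center K G) (qm K G z.2)))
      omega)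
  rw [Module.finrank_prod] at hd2
  have h9 : d + 2 ≤ finrank K G + finrank K t := by omega
  calc CV.dimSet K (G × G) X + 2 ≤ (d : WithBot ℕ∞) + 2 := by gcongr
    _ = ((d + 2 : ℕ) : WithBot ℕ∞) := by push_cast; rfl
    _ ≤ ((finrank K G + finrank K t : ℕ) : WithBot ℕ∞) := Nat.cast_le.mpr h9
    _ = _ := rfl

end Reg
end IrrCodim

/-- The irregular locus of the commuting variety has codimension at least
two:  every irreducible component `X` of `C^irr` (an irreducible subset of `C^irr`, maximal
among the irreducible subsets of `C^irr`, for the Zariski topology) satisfies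
`dim X ≤ dim g + rk g - 2`, i.e. `dim X + 2 ≤ dim C`. -/
theorem irregular_codim_ge_two
    (hred : LieAlgebra.radical k g = LieAlgebra.center k g) (hnc : ¬IsLieAbelian g)
    (t : LieSubalgebra k g) (ht : t.IsCartanSubalgebra)
    (X : Set (g × g)) (hXsub : X ⊆ Cirr k g t)
    (hXirr : @IsIrreducible (g × g) (CV.zar k (g × g)) X)
    (hXmax : ∀ X' : Set (g × g), X ⊆ X' → X' ⊆ Cirr k g t →
      @IsIrreducible (g × g) (CV.zar k (g × g)) X' → X' = X) :
    CV.dimSet k (g × g) X + 2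
      ≤ (((Module.finrank k g + Module.finrank k ↥t : ℕ) : ℕ∞) : WithBot ℕ∞) := by
  exact IrrCodim.final hred t ht X hXsub hXirr
end
end
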